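/- arXiv:2112.00391 — 3 statements merged into one kernel-verified Lean document; each statement's English description precedes it below -/
import Mathlib

section
/- (Berger–Wang equality for finite families.) For every nonempty finite family 𝒜 of real d×d matrices, the generalized spectral radius equals the joint spectral radius: limsup_{n→∞} max_{σ ∈ {0,…,m−1}^n} ρ(A_{σ_{n−1}}⋯A_{σ_0})^{1/n} = limsup_{n→∞} max_{σ ∈ {0,…,m−1}^n} ‖A_{σ_{n−1}}⋯A_{σ_0}‖^{1/n}. -/
/-!
That the generalized radius is at most the joint one follows from `specRad B ≤ c * opNorm N B`, with
a constant `c` depending only on the norm (`exists_specRad_le`), since `c ^ (1 / n) → 1`.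

For the converse, let `r < s` be numbers strictly above the generalized spectral radius. All
eigenvalues of a product of length `n` are then `O(r ^ n)`, uniformly over the products, and the
point is to find a norm `p` with `p (A i x) ≤ s * p x` for all `i` (`exists_norm_of_specBound`):
equivalence of norms then bounds every product of length `n` by a constant times `s ^ n`.
The norm is found by induction on the dimension, for families of endomorphisms of abstract spaces.

* Irreducible case (`exists_norm_of_irreducible`). Let `S` be the algebra generated by the family.
  The trace form `(B, X) ↦ tr (B X)` is nondegenerate on `S`: if `B ≠ 0` lay in its radical, then
  irreducibility would give `X ∈ S` and `v ≠ 0` with `X B v = v`, and a polynomial without constant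
  term in `e = X B` would be a nonzero idempotent of trace zero. Hence every linear functional on
  `S`, in particular every matrix coefficient, is `B ↦ tr (B X)` for some `X ∈ S`, that is, a
  combination of the functionals `B ↦ tr (B T_v)` with `T_v` a product. As `T_w T_v` is again a
  product, its trace is `O(r ^ |w|)`, so all products of length `n` have size `O(r ^ n)`, and
  `p x = sup_w s ^ (-|w|) * |T_w x|` is the desired norm.
* Reducible case (`exists_norm_of_invariant`). For an invariant subspace `U`, norms on `U` and on
  `V ⧸ U` combine to `p x = p_U (π x) + K * p_Q (x mod U)`, with `π` a linear projection onto `U`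
  and `K` so large that the off-diagonal block costs at most the gap between the rates.
-/

open Filter Topology

/-- `N` is a norm on `ℝ^d`. -/
structure IsNorm (d : ℕ) (N : (Fin d → ℝ) → ℝ) : Prop where
  eq_zero_iff : ∀ x, N x = 0 ↔ x = 0
  add_le : ∀ x y, N (x + y) ≤ N x + N y
  smul_eq : ∀ (a : ℝ) (x), N (a • x) = |a| * N x

/-- The operator norm of the matrix `B` induced by the norm `N` on `ℝ^d`. -/
noncomputable def opNorm {d : ℕ} (N : (Fin d → ℝ) → ℝ)
    (B : Matrix (Fin d) (Fin d) ℝ) : ℝ :=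
  ⨆ x : {x : Fin d → ℝ // x ≠ 0}, N (B.mulVec x.1) / N x.1

/-- The product `A_{σ_{n-1}} ⋯ A_{σ_1} A_{σ_0}`. -/
noncomputable def word {d m : ℕ} (A : Fin m → Matrix (Fin d) (Fin d) ℝ)
    (n : ℕ) (σ : Fin n → Fin m) : Matrix (Fin d) (Fin d) ℝ :=
  (List.ofFn fun i => A (σ i)).reverse.prod

/-- `ρ_n(𝒜) = max_σ ‖A_σ‖^{1/n}` with respect to the norm `N`. -/
noncomputable def rhoN {d m : ℕ} (N : (Fin d → ℝ) → ℝ)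
    (A : Fin m → Matrix (Fin d) (Fin d) ℝ) (n : ℕ) : ℝ :=
  ⨆ σ : Fin n → Fin m, opNorm N (word A n σ) ^ ((n : ℝ)⁻¹)

/-- The joint spectral radius `ρ(𝒜) = limsup_{n→∞} ρ_n(𝒜)`. -/
noncomputable def jsr {d m : ℕ} (N : (Fin d → ℝ) → ℝ)
    (A : Fin m → Matrix (Fin d) (Fin d) ℝ) : ℝ :=
  Filter.limsup (rhoN N A) Filter.atTop

/-- The spectral radius of a real square matrix: the maximum modulus of its
complex eigenvalues. -/
noncomputable def specRad {d : ℕ} (B : Matrix (Fin d) (Fin d) ℝ) : ℝ :=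
  sSup ((fun μ => ‖μ‖) '' spectrum ℂ (B.map (fun t => (t : ℂ))))

/-! ### Nondegeneracy of the trace form on an irreducible algebra -/

/-- Some polynomial in `e` without constant term is the projection onto the generalized eigenspace
of the eigenvalue `1`, and the trace of that idempotent is its rank. -/
theorem exists_trace_ne_zero {V : Type*} [AddCommGroup V] [Module ℝ V] [FiniteDimensional ℝ V]
    (e : Module.End ℝ V) (u : V) (hu : u ≠ 0) (heu : e u = u) :
    ∃ g : Polynomial ℝ, LinearMap.trace ℝ V (e * Polynomial.aeval e g) ≠ 0 := by
  classical
  have ev : Module.End.HasEigenvector e 1 u :=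
    ⟨by rw [Module.End.mem_eigenspace_iff]; simpa using heu, hu⟩
  -- The factor `X` forces the idempotent built below to have no constant term,
  -- also when `e` is invertible.
  set p : Polynomial ℝ := minpoly ℝ e * Polynomial.X with hp
  have hp0 : p ≠ 0 :=
    mul_ne_zero (minpoly.ne_zero (Algebra.IsIntegral.isIntegral e)) Polynomial.X_ne_zero
  have hpe : Polynomial.aeval e p = 0 := by simp [hp]
  have hroot : p.IsRoot 1 := by
    have h := Module.End.aeval_apply_of_hasEigenvector (p := p) ev
    rw [hpe] at h
    simpa [hu] using h.symm
  obtain ⟨q, hq, hndvd⟩ := Polynomial.exists_eq_pow_rootMultiplicity_mul_and_not_dvd p hp0 1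
  set a := Polynomial.rootMultiplicity 1 p with ha
  have ha1 : 0 < a := (Polynomial.rootMultiplicity_pos hp0).2 hroot
  have hcop : IsCoprime ((Polynomial.X - Polynomial.C (1 : ℝ)) ^ a) q :=
    IsCoprime.pow_left ((Polynomial.irreducible_X_sub_C 1).coprime_iff_not_dvd.2 hndvd)
  obtain ⟨α, β, hαβ⟩ := hcop
  have hq0 : q.eval 0 = 0 := by
    have h1 : p.eval 0 = 0 := by simp [hp]
    rw [hq] at h1
    simpa using h1
  -- `β * q` is `1` modulo `(X - 1) ^ a` and `0` modulo `q`.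
  obtain ⟨g, hg⟩ : Polynomial.X ∣ β * q := by
    rw [Polynomial.X_dvd_iff, Polynomial.coeff_zero_eq_eval_zero]; simp [hq0]
  refine ⟨g, fun htr => ?_⟩
  have hP : e * Polynomial.aeval e g = Polynomial.aeval e (β * q) := by rw [hg]; simp
  rw [hP] at htr
  have hidem : IsIdempotentElem (Polynomial.aeval e (β * q)) := by
    have h : β * q * (β * q) = β * q - α * β * p := by
      rw [hq]
      linear_combination (β * q) * hαβ
    rw [IsIdempotentElem, ← map_mul, h, map_sub, map_mul _ _ p, hpe]; simp
  have hz := LinearMap.IsIdempotentElem.eq_zero_of_trace_eq_zero hidem htr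
  have h1 := Module.End.aeval_apply_of_hasEigenvector (p := β * q) ev
  have h2 : (β * q).eval 1 = 1 := by
    have := congrArg (Polynomial.eval 1) hαβ
    simpa [ha1.ne'] using this
  rw [hz, h2] at h1
  exact hu (by simpa using h1.symm)

theorem trace_form_nondegenerate {V : Type*} [AddCommGroup V] [Module ℝ V]
    [FiniteDimensional ℝ V] (S : Subalgebra ℝ (Module.End ℝ V))
    (hirr : ∀ U : Submodule ℝ V, (∀ X ∈ S, ∀ x ∈ U, X x ∈ U) → U = ⊥ ∨ U = ⊤)
    (B : Module.End ℝ V) (hB : B ∈ S)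
    (htr : ∀ X ∈ S, LinearMap.trace ℝ V (B * X) = 0) : B = 0 := by
  by_contra hne
  obtain ⟨v, hv⟩ : ∃ v, B v ≠ 0 := by
    by_contra! h
    exact hne (LinearMap.ext h)
  -- `U = S (B v)` is a nonzero `S`-invariant subspace, hence contains `v`.
  let U : Submodule ℝ V := (Subalgebra.toSubmodule S).map (LinearMap.applyₗ (B v))
  have hU : U = ⊥ ∨ U = ⊤ := by
    apply hirr
    rintro X hX _ ⟨Y, hY, rfl⟩
    exact ⟨X * Y, S.mul_mem hX hY, rfl⟩
  have hBU : B v ∈ U := ⟨1, S.one_mem, rfl⟩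
  have hU' : U = ⊤ := hU.resolve_left fun h => hv (by simpa [h] using hBU)
  obtain ⟨X, hX, hXv⟩ : v ∈ U := hU' ▸ Submodule.mem_top
  have hv0 : v ≠ 0 := by rintro rfl; simp at hv
  obtain ⟨g, hg⟩ := exists_trace_ne_zero (X * B) v hv0 hXv
  have hXB : X * B ∈ S := S.mul_mem hX hB
  have hgS : Polynomial.aeval (X * B) g ∈ S :=
    Algebra.adjoin_le (Set.singleton_subset_iff.2 hXB) (Polynomial.aeval_mem_adjoin_singleton ℝ _)
  refine hg ?_
  rw [mul_assoc, LinearMap.trace_mul_comm, mul_assoc]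
  exact htr _ (S.mul_mem hgS hX)

/-- Nondegeneracy of the trace form: linear functionals are represented on `S` by elements of
`S`. -/
theorem exists_trace_repr {V : Type*} [AddCommGroup V] [Module ℝ V]
    [FiniteDimensional ℝ V] (S : Subalgebra ℝ (Module.End ℝ V))
    (hirr : ∀ U : Submodule ℝ V, (∀ X ∈ S, ∀ x ∈ U, X x ∈ U) → U = ⊥ ∨ U = ⊤)
    (φ : Module.End ℝ V →ₗ[ℝ] ℝ) :
    ∃ X ∈ S, ∀ B ∈ S, φ B = LinearMap.trace ℝ V (B * X) := by
  let Φ : S →ₗ[ℝ] Module.Dual ℝ S :=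
    LinearMap.mk₂ ℝ (fun X B => LinearMap.trace ℝ V ((B : Module.End ℝ V) * X))
      (by intros; simp [mul_add]) (by intros; simp) (by intros; simp [add_mul]) (by intros; simp)
  have hinj : Function.Injective Φ := by
    rw [← LinearMap.ker_eq_bot, LinearMap.ker_eq_bot']
    intro X hX
    have := trace_form_nondegenerate S hirr X X.2 fun Y hY => by
      have := congrArg (fun ψ : Module.Dual ℝ S => ψ ⟨Y, hY⟩) hX
      rw [LinearMap.trace_mul_comm]
      simpa [Φ] using this
    exact Subtype.ext this
  obtain ⟨X, hX⟩ := (LinearMap.injective_iff_surjective_of_finrank_eq_finrank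
    Subspace.dual_finrank_eq.symm).1 hinj (φ ∘ₗ S.val.toLinearMap)
  refine ⟨X, X.2, fun B hB => ?_⟩
  have := congrArg (fun ψ : Module.Dual ℝ S => ψ ⟨B, hB⟩) hX
  simpa [Φ] using this.symm

/-! ### Complex eigenvalues and the real minimal polynomial -/

theorem eval_minpoly_of_mem_spectrum {d : ℕ} (B : Matrix (Fin d) (Fin d) ℝ) (z : ℂ)
    (hz : z ∈ spectrum ℂ (B.map (fun t => (t : ℂ)))) :
    Polynomial.aeval z (minpoly ℝ B) = 0 := by
  have hne : Nontrivial (Matrix (Fin d) (Fin d) ℂ) := by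
    by_contra h
    rw [not_nontrivial_iff_subsingleton] at h
    simp [spectrum.of_subsingleton] at hz
  have h0 : Polynomial.aeval (B.map (fun t => (t : ℂ))) ((minpoly ℝ B).map (algebraMap ℝ ℂ)) = 0 := by
    rw [Polynomial.aeval_map_algebraMap]
    have := Polynomial.aeval_algHom_apply (Complex.ofRealAm.mapMatrix (m := Fin d)) B (minpoly ℝ B)
    rw [minpoly.aeval, map_zero] at this
    exact this
  have := spectrum.subset_polynomial_aeval (B.map (fun t => (t : ℂ)))
    ((minpoly ℝ B).map (algebraMap ℝ ℂ)) ⟨z, hz, rfl⟩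
  rw [h0, spectrum.zero_eq] at this
  simpa [Polynomial.eval_map_algebraMap] using this

theorem mem_spectrum_of_eval_minpoly {d : ℕ} (B : Matrix (Fin d) (Fin d) ℝ) (z : ℂ)
    (hz : Polynomial.aeval z (minpoly ℝ B) = 0) :
    z ∈ spectrum ℂ (B.map (fun t => (t : ℂ))) := by
  rw [Matrix.mem_spectrum_iff_isRoot_charpoly]
  have : (B.map (fun t => (t : ℂ))).charpoly = B.charpoly.map (algebraMap ℝ ℂ) :=
    Matrix.charpoly_map B (algebraMap ℝ ℂ)
  rw [this, Polynomial.IsRoot, Polynomial.eval_map_algebraMap]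
  obtain ⟨c, hc⟩ := Matrix.minpoly_dvd_charpoly B
  rw [hc, map_mul, hz, zero_mul]

theorem abs_trace_le {V : Type*} [AddCommGroup V] [Module ℝ V] [FiniteDimensional ℝ V]
    (f : Module.End ℝ V) (M : ℝ)
    (hM : ∀ z : ℂ, Polynomial.aeval z (minpoly ℝ f) = 0 → ‖z‖ ≤ M) :
    |LinearMap.trace ℝ V f| ≤ Module.finrank ℝ V * M := by
  let b := Module.finBasis ℝ V
  set B := LinearMap.toMatrix b b f with hBdef
  have hmp : minpoly ℝ B = minpoly ℝ f :=
    minpoly.algEquiv_eq (LinearMap.toMatrixAlgEquiv b) f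
  set Bc := B.map (fun t => (t : ℂ))
  have htr : ((LinearMap.trace ℝ V f : ℝ) : ℂ) = Bc.charpoly.roots.sum := by
    rw [← Matrix.trace_eq_sum_roots_charpoly, LinearMap.trace_eq_matrix_trace ℝ b]
    simp [Bc, Matrix.trace, hBdef]
  rw [← Real.norm_eq_abs, ← Complex.norm_real, htr]
  have hcard : Bc.charpoly.roots.card = Module.finrank ℝ V := by
    rw [IsAlgClosed.card_roots_eq_natDegree, Matrix.charpoly_natDegree_eq_dim, Fintype.card_fin]
  calc _ ≤ (Bc.charpoly.roots.map (fun z => ‖z‖)).sum := norm_multiset_sum_le _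
    _ ≤ (Bc.charpoly.roots.map (fun z => ‖z‖)).card • M := by
        refine Multiset.sum_le_card_nsmul _ _ fun x hx => ?_
        obtain ⟨z, hz, rfl⟩ := Multiset.mem_map.1 hx
        refine hM z ?_
        rw [← hmp]
        exact eval_minpoly_of_mem_spectrum _ _
          (Matrix.mem_spectrum_iff_isRoot_charpoly.2 (Polynomial.isRoot_of_mem_roots hz))
    _ = _ := by rw [Multiset.card_map, hcard, nsmul_eq_mul]

/-! ### A norm adapted to a family with small eigenvalues -/

/-- A norm on a finite-dimensional space dominates every seminorm. -/
theorem exists_seminorm_le {V : Type*} [AddCommGroup V] [Module ℝ V] [FiniteDimensional ℝ V]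
    (p q : Seminorm ℝ V) (hp : ∀ x, p x = 0 → x = 0) :
    ∃ L : ℝ, 0 ≤ L ∧ ∀ x, q x ≤ L * p x := by
  let : Norm V := ⟨p⟩
  have core : NormedSpace.Core ℝ V :=
    { norm_nonneg := fun x => apply_nonneg p x
      norm_smul := fun a x => map_smul_eq_mul p a x
      norm_triangle := fun x y => map_add_le_add p x y
      norm_eq_zero_iff := fun x => ⟨hp x, fun h => by rw [h]; exact map_zero p⟩ }
  let : NormedAddCommGroup V := NormedAddCommGroup.ofCore core
  let : NormedSpace ℝ V := NormedSpace.ofCore core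
  let b := Module.finBasis ℝ V
  let c : ∀ j, V →L[ℝ] ℝ := fun j => LinearMap.toContinuousLinearMap (b.coord j)
  refine ⟨∑ j, ‖c j‖ * q (b j), Finset.sum_nonneg fun j _ => by positivity, fun x => ?_⟩
  calc q x = q (∑ j, b.repr x j • b j) := by rw [b.sum_repr]
    _ ≤ ∑ j, q (b.repr x j • b j) :=
      Finset.le_sum_of_subadditive q (map_zero q).le (map_add_le_add q) _ _
    _ ≤ ∑ j, ‖c j‖ * q (b j) * p x := by
      refine Finset.sum_le_sum fun j _ => ?_
      rw [map_smul_eq_mul]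
      have h : ‖b.repr x j‖ ≤ ‖c j‖ * p x := (c j).le_opNorm x
      nlinarith [apply_nonneg q (b j)]
    _ = _ := by rw [Finset.sum_mul]

/-- All complex eigenvalues of each product of `n` members of the family `T` have modulus at most
`C * r ^ n`. Eigenvalues are encoded as complex roots of the real minimal polynomial, which makes
sense on any real vector space and passes easily to invariant subspaces and quotients. -/
def SpecBound {ι V : Type*} [AddCommGroup V] [Module ℝ V] (T : ι → Module.End ℝ V)
    (C r : ℝ) : Prop :=
  ∀ (w : List ι) (z : ℂ), Polynomial.aeval z (minpoly ℝ (w.map T).prod) = 0 →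
    ‖z‖ ≤ C * r ^ w.length

theorem SpecBound.of_dvd {ι V W : Type*} [AddCommGroup V] [Module ℝ V] [AddCommGroup W]
    [Module ℝ W] {T : ι → Module.End ℝ V} {S : ι → Module.End ℝ W} {C r : ℝ}
    (hT : SpecBound T C r)
    (h : ∀ w : List ι, minpoly ℝ (w.map S).prod ∣ minpoly ℝ (w.map T).prod) :
    SpecBound S C r := by
  intro w z hz
  obtain ⟨c, hc⟩ := h w
  exact hT w z (by rw [hc, map_mul, hz, zero_mul])

theorem word_intertwine {ι V W : Type*} [AddCommGroup V] [Module ℝ V] [AddCommGroup W]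
    [Module ℝ W] {T : ι → Module.End ℝ V} {S : ι → Module.End ℝ W} (f : V →ₗ[ℝ] W)
    (h : ∀ i x, f (T i x) = S i (f x)) (w : List ι) (x : V) :
    f ((w.map T).prod x) = (w.map S).prod (f x) := by
  induction w with
  | nil => simp
  | cons i w ih => simp [h, ih]

theorem aeval_intertwine {V W : Type*} [AddCommGroup V] [Module ℝ V] [AddCommGroup W]
    [Module ℝ W] {T : Module.End ℝ V} {S : Module.End ℝ W} (f : V →ₗ[ℝ] W)
    (h : ∀ x, f (T x) = S (f x)) (p : Polynomial ℝ) (x : V) :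
    f (Polynomial.aeval T p x) = Polynomial.aeval S p (f x) := by
  have hpow : ∀ (n : ℕ) (x : V), f ((T ^ n) x) = (S ^ n) (f x) := by
    intro n
    induction n with
    | zero => simp
    | succ n ih => intro x; simp [pow_succ, ih, h]
  induction p using Polynomial.induction_on' with
  | add p q hp hq => simp [hp, hq]
  | monomial n a => simp [Polynomial.aeval_monomial, hpow, Module.algebraMap_end_apply]

theorem SpecBound.of_injective {ι V W : Type*} [AddCommGroup V] [Module ℝ V] [AddCommGroup W]
    [Module ℝ W] {T : ι → Module.End ℝ V} {S : ι → Module.End ℝ W} {C r : ℝ}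
    (hS : SpecBound S C r) (f : V →ₗ[ℝ] W) (hf : Function.Injective f)
    (h : ∀ i x, f (T i x) = S i (f x)) : SpecBound T C r := by
  refine hS.of_dvd fun w => minpoly.dvd _ _ (LinearMap.ext fun x => hf ?_)
  rw [aeval_intertwine f (word_intertwine f h w), minpoly.aeval]
  simp

theorem SpecBound.of_surjective {ι V W : Type*} [AddCommGroup V] [Module ℝ V] [AddCommGroup W]
    [Module ℝ W] {T : ι → Module.End ℝ V} {S : ι → Module.End ℝ W} {C r : ℝ}
    (hT : SpecBound T C r) (f : V →ₗ[ℝ] W) (hf : Function.Surjective f)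
    (h : ∀ i x, f (T i x) = S i (f x)) : SpecBound S C r := by
  refine hT.of_dvd fun w => minpoly.dvd _ _ (LinearMap.ext fun y => ?_)
  obtain ⟨x, rfl⟩ := hf y
  rw [← aeval_intertwine f (word_intertwine f h w), minpoly.aeval]
  simp

/-- `X` is a combination of products `T_v`, and `T_w T_v` is the product along `w ++ v`, whose trace
is bounded by its eigenvalues. -/
theorem exists_trace_word_bound {ι V : Type*} [AddCommGroup V] [Module ℝ V]
    [FiniteDimensional ℝ V] {T : ι → Module.End ℝ V} {C r : ℝ}
    (hT : SpecBound T C r) (X : Module.End ℝ V) (hX : X ∈ Algebra.adjoin ℝ (Set.range T)) :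
    ∃ K : ℝ, ∀ w : List ι, |LinearMap.trace ℝ V ((w.map T).prod * X)| ≤ K * r ^ w.length := by
  have hX' : X ∈ Submodule.span ℝ (Submonoid.closure (Set.range T) : Set (Module.End ℝ V)) := by
    rw [← Algebra.adjoin_eq_span]; exact hX
  induction hX' using Submodule.span_induction with
  | mem Y hY =>
    obtain ⟨v, rfl⟩ : ∃ v : List ι, Y = (v.map T).prod := by
      refine Submonoid.closure_induction (motive := fun Y _ => ∃ v : List ι, Y = (v.map T).prod)
        ?_ ⟨[], by simp⟩ ?_ hY
      · rintro _ ⟨i, rfl⟩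
        exact ⟨[i], by simp⟩
      · rintro _ _ _ _ ⟨v, rfl⟩ ⟨v', rfl⟩
        exact ⟨v ++ v', by simp⟩
    refine ⟨Module.finrank ℝ V * (C * r ^ v.length), fun w => ?_⟩
    have := abs_trace_le ((w ++ v).map T).prod (C * r ^ (w ++ v).length) (hT (w ++ v))
    rw [List.map_append, List.prod_append, List.length_append, pow_add] at this
    linarith
  | zero => exact ⟨0, fun w => by simp⟩
  | add Y Z hY hZ ihY ihZ =>
    obtain ⟨K, hK⟩ := ihY (by rw [← Subalgebra.mem_toSubmodule, Algebra.adjoin_eq_span]; exact hY)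
    obtain ⟨K', hK'⟩ := ihZ (by rw [← Subalgebra.mem_toSubmodule, Algebra.adjoin_eq_span]; exact hZ)
    refine ⟨K + K', fun w => ?_⟩
    rw [mul_add, map_add, add_mul]
    exact (abs_add_le _ _).trans (add_le_add (hK w) (hK' w))
  | smul a Y hY ihY =>
    obtain ⟨K, hK⟩ := ihY (by rw [← Subalgebra.mem_toSubmodule, Algebra.adjoin_eq_span]; exact hY)
    refine ⟨|a| * K, fun w => ?_⟩
    rw [mul_smul_comm, map_smul, smul_eq_mul, abs_mul, mul_assoc]
    exact mul_le_mul_of_nonneg_left (hK w) (abs_nonneg a)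

theorem exists_norm_of_irreducible {ι V : Type*} [AddCommGroup V] [Module ℝ V]
    [FiniteDimensional ℝ V] {T : ι → Module.End ℝ V} {C r s : ℝ} (hr : 0 ≤ r) (hs : 0 < s)
    (hrs : r ≤ s) (hT : SpecBound T C r)
    (hirr : ∀ U : Submodule ℝ V, (∀ i, ∀ x ∈ U, T i x ∈ U) → U = ⊥ ∨ U = ⊤) :
    ∃ p : Seminorm ℝ V, (∀ x, p x = 0 → x = 0) ∧ ∀ i x, p (T i x) ≤ s * p x := by
  set S := Algebra.adjoin ℝ (Set.range T) with hS
  have hTS : ∀ i, T i ∈ S := fun i => Algebra.subset_adjoin ⟨i, rfl⟩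
  have hwS : ∀ w : List ι, (w.map T).prod ∈ S := fun w =>
    S.list_prod_mem fun X hX => by
      obtain ⟨i, -, rfl⟩ := List.mem_map.1 hX
      exact hTS i
  let b := Module.finBasis ℝ V
  have hcoord : ∀ x j, ∃ K : ℝ, ∀ w : List ι, |b.coord j ((w.map T).prod x)| ≤ K * r ^ w.length := by
    intro x j
    obtain ⟨X, hX, hφ⟩ := exists_trace_repr S
      (fun U hU => hirr U fun i => hU (T i) (hTS i)) (b.coord j ∘ₗ LinearMap.applyₗ x)
    obtain ⟨K, hK⟩ := exists_trace_word_bound hT X hX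
    exact ⟨K, fun w => (congrArg abs (hφ _ (hwS w))).trans_le (hK w)⟩
  -- The norm is `x ↦ sup_w F x w`; the bound on the coordinates makes the supremum finite.
  let F : V → List ι → ℝ := fun x w => (s ^ w.length)⁻¹ * ∑ j, |b.coord j ((w.map T).prod x)|
  have hbdd : ∀ x, BddAbove (Set.range (F x)) := by
    intro x
    choose K hK using hcoord x
    refine ⟨∑ j, |K j|, ?_⟩
    rintro _ ⟨w, rfl⟩
    have hsw : 0 < s ^ w.length := pow_pos hs _
    rw [inv_mul_le_iff₀ hsw, Finset.mul_sum]
    refine Finset.sum_le_sum fun j _ => (hK j w).trans ?_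
    have h1 : r ^ w.length ≤ s ^ w.length := pow_le_pow_left₀ hr hrs _
    have h2 : 0 ≤ r ^ w.length := pow_nonneg hr _
    nlinarith [le_abs_self (K j), abs_nonneg (K j)]
  have hle : ∀ x w, F x w ≤ ⨆ w, F x w := fun x w => le_ciSup (hbdd x) w
  let p : Seminorm ℝ V := Seminorm.of (fun x => ⨆ w, F x w)
    (by
      intro x y
      refine ciSup_le fun w => le_trans ?_ (add_le_add (hle x w) (hle y w))
      have hsw : 0 < s ^ w.length := pow_pos hs _
      simp only [F]
      rw [← mul_add, ← Finset.sum_add_distrib]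
      gcongr with j
      rw [map_add, map_add]
      exact abs_add_le _ _)
    (by
      intro a x
      rw [Real.mul_iSup_of_nonneg (norm_nonneg a)]
      congr 1
      ext w
      simp only [F]
      rw [mul_left_comm]
      simp [abs_mul, Finset.mul_sum])
  refine ⟨p, fun x hx => ?_, fun i x => ?_⟩
  · have h0 : ∑ j, |b.coord j x| ≤ 0 := by
      have : F x [] ≤ 0 := (hle x []).trans_eq hx
      simpa [F] using this
    have h1 := (Finset.sum_eq_zero_iff_of_nonneg fun j _ => abs_nonneg (b.coord j x)).1
      (le_antisymm h0 (Finset.sum_nonneg fun j _ => abs_nonneg _))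
    refine b.forall_coord_eq_zero_iff.1 fun j => ?_
    exact abs_eq_zero.1 (h1 j (Finset.mem_univ j))
  · refine ciSup_le fun w => ?_
    have : F (T i x) w = s * F x (w ++ [i]) := by
      simp only [F, List.map_append, List.prod_append, List.length_append]
      simp only [List.map_cons, List.map_nil, List.prod_cons, List.prod_nil, mul_one,
        List.length_singleton, Module.End.mul_apply]
      field_simp
      ring
    rw [this]
    exact mul_le_mul_of_nonneg_left (hle x _) hs.le

/-- Norms adapted to the restriction and to the quotient by an invariant subspace `U`, at rate `t`,
combine to a norm adapted to the whole family at any rate `s > t`. -/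
theorem exists_norm_of_invariant {ι V : Type*} [Fintype ι] [AddCommGroup V] [Module ℝ V]
    [FiniteDimensional ℝ V] {T : ι → Module.End ℝ V} {t s : ℝ} (hts : t < s)
    (U : Submodule ℝ V) (hU : ∀ i, U ≤ U.comap (T i))
    (pU : Seminorm ℝ U) (hpU : ∀ x, pU x = 0 → x = 0)
    (hpUT : ∀ i x, pU ((T i).restrict (hU i) x) ≤ t * pU x)
    (pQ : Seminorm ℝ (V ⧸ U)) (hpQ : ∀ x, pQ x = 0 → x = 0)
    (hpQT : ∀ i x, pQ (U.mapQ U (T i) (hU i) x) ≤ t * pQ x) :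
    ∃ p : Seminorm ℝ V, (∀ x, p x = 0 → x = 0) ∧ ∀ i x, p (T i x) ≤ s * p x := by
  obtain ⟨π, hπ⟩ := LinearMap.exists_leftInverse_of_injective U.subtype U.ker_subtype
  have hπ' : ∀ u : U, π u = u := fun u => LinearMap.congr_fun hπ u
  have hker : ∀ i, U ≤ LinearMap.ker (π ∘ₗ T i ∘ₗ (LinearMap.id - U.subtype ∘ₗ π)) := by
    intro i u hu
    simp [hπ' ⟨u, hu⟩]
  -- The off-diagonal block of `T i` relative to `V = U ⊕ ker π` factors through `V ⧸ U`.
  have hL : ∀ i, ∃ L : ℝ, 0 ≤ L ∧ ∀ y, pU (U.liftQ _ (hker i) y) ≤ L * pQ y := fun i =>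
    exists_seminorm_le pQ (pU.comp (U.liftQ _ (hker i))) hpQ
  choose L hL0 hL using hL
  set K : ℝ := (∑ i, L i) / (s - t) with hK
  have hst : 0 < s - t := sub_pos.2 hts
  have hK0 : 0 ≤ K := div_nonneg (Finset.sum_nonneg fun i _ => hL0 i) hst.le
  -- `K` absorbs the off-diagonal blocks; `+ 1` keeps the weight positive, for definiteness.
  let c : NNReal := ⟨K + 1, by linarith⟩
  let p : Seminorm ℝ V := pU.comp π + c • pQ.comp U.mkQ
  have hp : ∀ x, p x = pU (π x) + (K + 1) * pQ (U.mkQ x) := fun x => rfl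
  refine ⟨p, fun x hx => ?_, fun i x => ?_⟩
  · rw [hp] at hx
    have h1 : 0 ≤ pU (π x) := apply_nonneg _ _
    have h2 : 0 ≤ pQ (U.mkQ x) := apply_nonneg _ _
    have h3 : U.mkQ x = 0 := hpQ _ (by nlinarith)
    have h4 : π x = 0 := hpU _ (by nlinarith)
    have hxU : x ∈ U := by simpa using h3
    have := hπ' ⟨x, hxU⟩
    rw [h4] at this
    exact (congrArg Subtype.val this).symm
  · rw [hp, hp]
    have h1 : pU (π (T i x)) ≤ t * pU (π x) + L i * pQ (U.mkQ x) := by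
      have hsplit : π (T i x) = (T i).restrict (hU i) (π x) + U.liftQ _ (hker i) (U.mkQ x) := by
        have h := hπ' ((T i).restrict (hU i) (π x))
        rw [LinearMap.restrict_apply] at h
        rw [Submodule.mkQ_apply, Submodule.liftQ_apply, LinearMap.restrict_apply, ← h]
        simp
      rw [hsplit]
      exact (map_add_le_add pU _ _).trans (add_le_add (hpUT i _) (hL i _))
    have h2 : pQ (U.mkQ (T i x)) ≤ t * pQ (U.mkQ x) := hpQT i (U.mkQ x)
    have h3 : L i ≤ (s - t) * K := by
      rw [hK, mul_div_cancel₀ _ hst.ne']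
      exact Finset.single_le_sum (fun i _ => hL0 i) (Finset.mem_univ i)
    have h4 : 0 ≤ pU (π x) := apply_nonneg _ _
    have h5 : 0 ≤ pQ (U.mkQ x) := apply_nonneg _ _
    nlinarith [mul_le_mul_of_nonneg_right h3 h5, mul_le_mul_of_nonneg_left h2 (by linarith : 0 ≤ K + 1),
      mul_nonneg hst.le h4, mul_nonneg hst.le h5]

theorem exists_norm_of_specBound {ι : Type*} [Fintype ι] (n : ℕ) :
    ∀ {V : Type*} [AddCommGroup V] [Module ℝ V] [FiniteDimensional ℝ V]
      (T : ι → Module.End ℝ V) (C r s : ℝ), Module.finrank ℝ V = n → 0 ≤ r → r < s →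
      SpecBound T C r →
      ∃ p : Seminorm ℝ V, (∀ x, p x = 0 → x = 0) ∧ ∀ i x, p (T i x) ≤ s * p x := by
  induction n using Nat.strong_induction_on with
  | _ n ih =>
    intro V _ _ _ T C r s hn hr hrs hT
    by_cases hirr : ∀ U : Submodule ℝ V, (∀ i, ∀ x ∈ U, T i x ∈ U) → U = ⊥ ∨ U = ⊤
    · exact exists_norm_of_irreducible hr (hr.trans_lt hrs) hrs.le hT hirr
    push Not at hirr
    obtain ⟨U, hU, hbot, htop⟩ := hirr
    have hU' : ∀ i, U ≤ U.comap (T i) := hU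
    have hposU : 0 < Module.finrank ℝ U := Module.finrank_pos_iff.2 (U.nontrivial_iff_ne_bot.2 hbot)
    have hsum := Submodule.finrank_quotient_add_finrank U
    have hltU := Submodule.finrank_lt htop
    obtain ⟨pU, hpU, hpUT⟩ := ih _ (hn ▸ hltU) (fun i => (T i).restrict (hU' i)) C r ((r + s) / 2)
      rfl hr (by linarith) (hT.of_injective U.subtype U.injective_subtype fun i x => rfl)
    obtain ⟨pQ, hpQ, hpQT⟩ := ih (Module.finrank ℝ (V ⧸ U)) (by omega)
      (fun i => U.mapQ U (T i) (hU' i)) C r ((r + s) / 2)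
      rfl hr (by linarith) (hT.of_surjective U.mkQ U.mkQ_surjective fun i x => rfl)
    exact exists_norm_of_invariant (by linarith : (r + s) / 2 < s) U hU' pU hpU hpUT
      pQ hpQ hpQT

/-! ### Upper limits of maxima of `n`-th roots -/

/-- The maximum of `f n σ ^ (1 / n)` over the words `σ` of length `n`. At `n = 0` the exponent is
`0`, which does not affect upper limits. -/
noncomputable def rootMax {m : ℕ} (f : ∀ n : ℕ, (Fin n → Fin m) → ℝ) (n : ℕ) : ℝ :=
  ⨆ σ : Fin n → Fin m, f n σ ^ ((n : ℝ)⁻¹)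

theorem rootMax_nonneg {m : ℕ} {f : ∀ n : ℕ, (Fin n → Fin m) → ℝ} (hf : ∀ n σ, 0 ≤ f n σ)
    (n : ℕ) : 0 ≤ rootMax f n :=
  Real.iSup_nonneg fun σ => Real.rpow_nonneg (hf n σ) _

theorem eventually_rootMax_le {m : ℕ} {f : ∀ n : ℕ, (Fin n → Fin m) → ℝ}
    (hf : ∀ n σ, 0 ≤ f n σ) {c s : ℝ} (hc : 0 < c) (hs : 0 ≤ s)
    (h : ∀ᶠ n in atTop, ∀ σ, f n σ ≤ c * s ^ n) :
    ∀ᶠ n : ℕ in atTop, rootMax f n ≤ c ^ ((n : ℝ)⁻¹) * s := by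
  filter_upwards [h, eventually_ne_atTop 0] with n hn hn0
  have hc' : 0 ≤ c ^ ((n : ℝ)⁻¹) := Real.rpow_nonneg hc.le _
  refine Real.iSup_le (fun σ => ?_) (mul_nonneg hc' hs)
  calc f n σ ^ ((n : ℝ)⁻¹) ≤ (c * s ^ n) ^ ((n : ℝ)⁻¹) :=
        Real.rpow_le_rpow (hf n σ) (hn σ) (by positivity)
    _ = c ^ ((n : ℝ)⁻¹) * s := by
        rw [Real.mul_rpow hc.le (pow_nonneg hs n), Real.pow_rpow_inv_natCast hs hn0]

theorem tendsto_root_mul {c : ℝ} (hc : 0 < c) (s : ℝ) :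
    Tendsto (fun n : ℕ => c ^ ((n : ℝ)⁻¹) * s) atTop (𝓝 s) := by
  have h : Tendsto (fun n : ℕ => c ^ ((n : ℝ)⁻¹)) atTop (𝓝 (c ^ (0 : ℝ))) :=
    ((Real.continuous_const_rpow hc.ne').tendsto 0).comp tendsto_inv_atTop_nhds_zero_nat
  simpa using h.mul_const s

theorem isBoundedUnder_rootMax {m : ℕ} {f : ∀ n : ℕ, (Fin n → Fin m) → ℝ}
    (hf : ∀ n σ, 0 ≤ f n σ) {c Q : ℝ} (hc : 0 < c) (hQ : 0 ≤ Q)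
    (h : ∀ n σ, f n σ ≤ c * Q ^ n) : IsBoundedUnder (· ≤ ·) atTop (rootMax f) :=
  (tendsto_root_mul hc Q).isBoundedUnder_le.mono_le
    (eventually_rootMax_le hf hc hQ (.of_forall h))

theorem isCoboundedUnder_rootMax {m : ℕ} {f : ∀ n : ℕ, (Fin n → Fin m) → ℝ}
    (hf : ∀ n σ, 0 ≤ f n σ) : IsCoboundedUnder (· ≤ ·) atTop (rootMax f) :=
  (isBoundedUnder_of ⟨0, rootMax_nonneg hf⟩ : IsBoundedUnder (· ≥ ·) atTop (rootMax f)).isCoboundedUnder_le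

theorem limsup_rootMax_le {m : ℕ} {f : ∀ n : ℕ, (Fin n → Fin m) → ℝ}
    (hf : ∀ n σ, 0 ≤ f n σ) {c s : ℝ} (hc : 0 < c) (hs : 0 ≤ s)
    (h : ∀ᶠ n in atTop, ∀ σ, f n σ ≤ c * s ^ n) : limsup (rootMax f) atTop ≤ s := by
  have ht := tendsto_root_mul hc s
  rw [← ht.limsup_eq]
  exact limsup_le_limsup (eventually_rootMax_le hf hc hs h) (isCoboundedUnder_rootMax hf)
    ht.isBoundedUnder_le

theorem limsup_rootMax_nonneg {m : ℕ} {f : ∀ n : ℕ, (Fin n → Fin m) → ℝ}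
    (hf : ∀ n σ, 0 ≤ f n σ) {c Q : ℝ} (hc : 0 < c) (hQ : 0 ≤ Q)
    (h : ∀ n σ, f n σ ≤ c * Q ^ n) : 0 ≤ limsup (rootMax f) atTop :=
  le_limsup_of_frequently_le (.of_forall (rootMax_nonneg hf)) (isBoundedUnder_rootMax hf hc hQ h)

theorem eventually_le_pow {m : ℕ} {f : ∀ n : ℕ, (Fin n → Fin m) → ℝ}
    (hf : ∀ n σ, 0 ≤ f n σ) {c Q s : ℝ} (hc : 0 < c) (hQ : 0 ≤ Q)
    (h : ∀ n σ, f n σ ≤ c * Q ^ n) (hlt : limsup (rootMax f) atTop < s) :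
    ∀ᶠ n in atTop, ∀ σ, f n σ ≤ s ^ n := by
  filter_upwards [eventually_lt_of_limsup_lt hlt (isBoundedUnder_rootMax hf hc hQ h),
    eventually_ne_atTop 0] with n hn hn0 σ
  have h1 : f n σ ^ ((n : ℝ)⁻¹) ≤ s :=
    (le_ciSup (f := fun σ => f n σ ^ ((n : ℝ)⁻¹)) (Set.finite_range _).bddAbove σ).trans hn.le
  calc f n σ = (f n σ ^ ((n : ℝ)⁻¹)) ^ n := (Real.rpow_inv_natCast_pow (hf n σ) hn0).symm
    _ ≤ s ^ n := pow_le_pow_left₀ (Real.rpow_nonneg (hf n σ) _) h1 n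

/-! ### Operator norm and spectral radius of matrices -/

/-- A norm in the sense of `IsNorm`, as a bundled seminorm. -/
noncomputable def IsNorm.toSeminorm {d : ℕ} {N : (Fin d → ℝ) → ℝ} (hN : IsNorm d N) :
    Seminorm ℝ (Fin d → ℝ) :=
  Seminorm.of N hN.add_le hN.smul_eq

theorem IsNorm.nonneg {d : ℕ} {N : (Fin d → ℝ) → ℝ} (hN : IsNorm d N) (x : Fin d → ℝ) :
    0 ≤ N x :=
  apply_nonneg hN.toSeminorm x

theorem opNorm_nonneg {d : ℕ} {N : (Fin d → ℝ) → ℝ} (hN : IsNorm d N)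
    (B : Matrix (Fin d) (Fin d) ℝ) : 0 ≤ opNorm N B :=
  Real.iSup_nonneg fun _ => div_nonneg (hN.nonneg _) (hN.nonneg _)

theorem opNorm_le {d : ℕ} {N : (Fin d → ℝ) → ℝ} (hN : IsNorm d N)
    {B : Matrix (Fin d) (Fin d) ℝ} {c : ℝ} (hc : 0 ≤ c) (h : ∀ x, N (B.mulVec x) ≤ c * N x) :
    opNorm N B ≤ c :=
  Real.iSup_le (fun x => div_le_of_le_mul₀ (hN.nonneg _) hc (h x.1)) hc

theorem le_opNorm_mul {d : ℕ} {N : (Fin d → ℝ) → ℝ} (hN : IsNorm d N)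
    (B : Matrix (Fin d) (Fin d) ℝ) (x : Fin d → ℝ) : N (B.mulVec x) ≤ opNorm N B * N x := by
  obtain ⟨L, hL0, hL⟩ := exists_seminorm_le hN.toSeminorm (hN.toSeminorm.comp B.mulVecLin)
    fun x => (hN.eq_zero_iff x).1
  rcases eq_or_ne x 0 with rfl | hx
  · rw [Matrix.mulVec_zero, (hN.eq_zero_iff 0).2 rfl, mul_zero]
  have hpos : 0 < N x := (hN.nonneg x).lt_of_ne fun h => hx ((hN.eq_zero_iff x).1 h.symm)
  rw [← div_le_iff₀ hpos]
  refine le_ciSup (f := fun x : {x : Fin d → ℝ // x ≠ 0} => N (B.mulVec x.1) / N x.1)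
    ⟨L, ?_⟩ ⟨x, hx⟩
  rintro _ ⟨y, rfl⟩
  exact div_le_of_le_mul₀ (hN.nonneg _) hL0 (hL y.1)

theorem specRad_nonneg {d : ℕ} (B : Matrix (Fin d) (Fin d) ℝ) : 0 ≤ specRad B :=
  Real.sSup_nonneg (by rintro _ ⟨z, -, rfl⟩; exact norm_nonneg z)

theorem norm_le_specRad {d : ℕ} (B : Matrix (Fin d) (Fin d) ℝ) {z : ℂ}
    (hz : z ∈ spectrum ℂ (B.map (fun t => (t : ℂ)))) : ‖z‖ ≤ specRad B :=
  le_csSup ((Matrix.finite_spectrum _).image _).bddAbove ⟨z, hz, rfl⟩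

/-- The spectral radius is at most the `ℓ^∞` operator norm of the complexified matrix, whose entries
are controlled by `opNorm N B`. -/
theorem exists_specRad_le {d : ℕ} {N : (Fin d → ℝ) → ℝ} (hN : IsNorm d N) :
    ∃ c : ℝ, 0 < c ∧ ∀ B : Matrix (Fin d) (Fin d) ℝ, specRad B ≤ c * opNorm N B := by
  let : NormedRing (Matrix (Fin d) (Fin d) ℂ) := Matrix.linftyOpNormedRing
  let : NormedAlgebra ℂ (Matrix (Fin d) (Fin d) ℂ) := Matrix.linftyOpNormedAlgebra
  have : CompleteSpace (Matrix (Fin d) (Fin d) ℂ) := FiniteDimensional.complete ℂ _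
  obtain ⟨L, hL0, hL⟩ := exists_seminorm_le hN.toSeminorm (normSeminorm ℝ (Fin d → ℝ))
    fun x => (hN.eq_zero_iff x).1
  set M : ℝ := ∑ j, N (Pi.single j 1) with hM
  have hM0 : 0 ≤ M := Finset.sum_nonneg fun j _ => hN.nonneg _
  set e : ℝ := ‖(1 : Matrix (Fin d) (Fin d) ℂ)‖ with he
  refine ⟨d * (L * M) * e + 1, by positivity, fun B => ?_⟩
  have hop := opNorm_nonneg hN B
  have hentry : ∀ i j, |B i j| ≤ L * M * opNorm N B := by
    intro i j
    calc |B i j| = ‖(B.mulVec (Pi.single j 1)) i‖ := by simp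
      _ ≤ ‖B.mulVec (Pi.single j 1)‖ := norm_le_pi_norm _ i
      _ ≤ L * N (B.mulVec (Pi.single j 1)) := hL _
      _ ≤ L * (opNorm N B * N (Pi.single j 1)) :=
        mul_le_mul_of_nonneg_left (le_opNorm_mul hN B _) hL0
      _ ≤ L * (opNorm N B * M) := by
        gcongr
        exact Finset.single_le_sum (f := fun j => N (Pi.single j 1)) (fun j _ => hN.nonneg _)
          (Finset.mem_univ j)
      _ = _ := by ring
  have hnorm : ‖B.map (fun t => (t : ℂ))‖ ≤ d * (L * M * opNorm N B) := by
    have h0 : 0 ≤ d * (L * M * opNorm N B) := by positivity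
    rw [Matrix.linfty_opNorm_def, ← NNReal.coe_mk _ h0, NNReal.coe_le_coe, Finset.sup_le_iff]
    intro i _
    rw [← NNReal.coe_le_coe, NNReal.coe_sum]
    calc _ ≤ ∑ _j : Fin d, L * M * opNorm N B :=
          Finset.sum_le_sum fun j _ => by simpa using hentry i j
      _ = _ := by simp
  refine Real.sSup_le ?_ (by positivity)
  rintro _ ⟨z, hz, rfl⟩
  calc ‖z‖ ≤ ‖B.map (fun t => (t : ℂ))‖ * e := spectrum.norm_le_norm_mul_of_mem hz
    _ ≤ d * (L * M * opNorm N B) * e := by gcongr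
    _ ≤ _ := by nlinarith

/-! ### Products along words and the Berger–Wang equality -/

theorem word_eq_list_prod {d m : ℕ} (A : Fin m → Matrix (Fin d) (Fin d) ℝ) (n : ℕ)
    (σ : Fin n → Fin m) : word A n σ = ((List.ofFn σ).reverse.map A).prod := by
  rw [word, List.map_reverse, List.map_ofFn]
  rfl

theorem exists_word_eq {d m : ℕ} (A : Fin m → Matrix (Fin d) (Fin d) ℝ) (w : List (Fin m)) :
    ∃ σ, word A w.length σ = (w.map A).prod := by
  obtain ⟨v, rfl⟩ := List.reverse_surjective w
  rw [List.length_reverse]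
  exact ⟨v.get, by rw [word_eq_list_prod, List.ofFn_get]⟩

theorem list_prod_toLin' {d m : ℕ} (A : Fin m → Matrix (Fin d) (Fin d) ℝ) (w : List (Fin m)) :
    (w.map fun i => Matrix.toLin' (A i)).prod = Matrix.toLin' (w.map A).prod := by
  have := map_list_prod (Matrix.toLinAlgEquiv' (R := ℝ) (n := Fin d)) (w.map A)
  rw [List.map_map] at this
  exact this.symm

theorem seminorm_word_le {ι V : Type*} [AddCommGroup V] [Module ℝ V] {T : ι → Module.End ℝ V}
    {p : Seminorm ℝ V} {s : ℝ} (hs : 0 ≤ s) (h : ∀ i x, p (T i x) ≤ s * p x) (w : List ι) (x : V) :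
    p ((w.map T).prod x) ≤ s ^ w.length * p x := by
  induction w with
  | nil => simp
  | cons i w ih =>
    rw [List.map_cons, List.prod_cons, Module.End.mul_apply, List.length_cons, pow_succ', mul_assoc]
    exact (h i _).trans (mul_le_mul_of_nonneg_left ih hs)

/-- A norm `p` contracted at rate `s` by each generator yields, by equivalence of norms, the bound
`O(s ^ n)` for the operator norms of products of length `n`. -/
theorem exists_opNorm_word_le {d m : ℕ} {N : (Fin d → ℝ) → ℝ} (hN : IsNorm d N)
    (A : Fin m → Matrix (Fin d) (Fin d) ℝ) (p : Seminorm ℝ (Fin d → ℝ))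
    (hp : ∀ x, p x = 0 → x = 0) {s : ℝ} (hs : 0 ≤ s)
    (hpA : ∀ i x, p ((A i).mulVec x) ≤ s * p x) :
    ∃ c : ℝ, 0 < c ∧ ∀ n σ, opNorm N (word A n σ) ≤ c * s ^ n := by
  obtain ⟨a, ha0, ha⟩ := exists_seminorm_le hN.toSeminorm p fun x => (hN.eq_zero_iff x).1
  obtain ⟨b, hb0, hb⟩ := exists_seminorm_le p hN.toSeminorm hp
  refine ⟨b * a + 1, by positivity, fun n σ => opNorm_le hN (by positivity) fun x => ?_⟩
  have h1 := seminorm_word_le (T := fun i => Matrix.toLin' (A i)) hs hpA (List.ofFn σ).reverse x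
  rw [list_prod_toLin', ← word_eq_list_prod, List.length_reverse, List.length_ofFn,
    Matrix.toLin'_apply] at h1
  have hsn : 0 ≤ s ^ n := pow_nonneg hs n
  calc N ((word A n σ).mulVec x) ≤ b * p ((word A n σ).mulVec x) := hb _
    _ ≤ b * (s ^ n * p x) := by gcongr
    _ ≤ b * (s ^ n * (a * N x)) := by gcongr; exact ha x
    _ ≤ (b * a + 1) * s ^ n * N x := by nlinarith [mul_nonneg hsn (hN.nonneg x)]

/-- The eventual bound extends to all words at the price of a constant, which absorbs the finitely
many short lengths through the a priori bound `c * Q ^ n`. -/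
theorem specBound_of_eventually {d m : ℕ} (A : Fin m → Matrix (Fin d) (Fin d) ℝ) {c Q r : ℝ}
    (hc : 0 ≤ c) (hQ : 0 ≤ Q) (hr : 0 < r) (h : ∀ n σ, specRad (word A n σ) ≤ c * Q ^ n)
    (hev : ∀ᶠ n in atTop, ∀ σ, specRad (word A n σ) ≤ r ^ n) :
    ∃ C : ℝ, SpecBound (fun i => Matrix.toLin' (A i)) C r := by
  obtain ⟨n₀, hn₀⟩ := eventually_atTop.1 hev
  have hnn : ∀ n, 0 ≤ c * (Q / r) ^ n := fun n => by positivity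
  have hsum : 0 ≤ ∑ n ∈ Finset.range n₀, c * (Q / r) ^ n := Finset.sum_nonneg fun n _ => hnn n
  refine ⟨1 + ∑ n ∈ Finset.range n₀, c * (Q / r) ^ n, fun w z hz => ?_⟩
  rw [list_prod_toLin', Matrix.minpoly_toLin'] at hz
  obtain ⟨σ, hσ⟩ := exists_word_eq A w
  refine (norm_le_specRad _ (mem_spectrum_of_eval_minpoly _ z hz)).trans ?_
  rw [← hσ]
  have hrn : 0 < r ^ w.length := pow_pos hr _
  rcases le_or_gt n₀ w.length with hle | hlt
  · refine (hn₀ _ hle σ).trans (le_mul_of_one_le_left hrn.le (by linarith))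
  · refine (h _ σ).trans ?_
    have h1 : c * Q ^ w.length = c * (Q / r) ^ w.length * r ^ w.length := by
      rw [mul_assoc, ← mul_pow, div_mul_cancel₀ _ hr.ne']
    rw [h1]
    gcongr
    have := Finset.single_le_sum (fun n _ => hnn n) (Finset.mem_range.2 hlt)
    linarith

/-- Berger–Wang: the generalized spectral radius equals the joint spectral radius. -/
theorem stmt3 (d m : ℕ) (hd : 1 ≤ d) (hm : 1 ≤ m)
    (N : (Fin d → ℝ) → ℝ) (hN : IsNorm d N)
    (A : Fin m → Matrix (Fin d) (Fin d) ℝ) :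
    Filter.limsup
        (fun n : ℕ => ⨆ σ : Fin n → Fin m, specRad (word A n σ) ^ ((n : ℝ)⁻¹))
        Filter.atTop
      = jsr N A := by
  change limsup (rootMax fun n σ => specRad (word A n σ)) atTop =
    limsup (rootMax fun n σ => opNorm N (word A n σ)) atTop
  have hρ0 : ∀ n (σ : Fin n → Fin m), 0 ≤ specRad (word A n σ) := fun n σ => specRad_nonneg _
  have hN0 : ∀ n (σ : Fin n → Fin m), 0 ≤ opNorm N (word A n σ) := fun n σ => opNorm_nonneg hN _
  -- The crude growth rate `Q` guarantees that both upper limits are taken over bounded sequences.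
  set Q : ℝ := ∑ i, opNorm N (A i) with hQ
  have hQ0 : 0 ≤ Q := Finset.sum_nonneg fun i _ => opNorm_nonneg hN _
  obtain ⟨a, ha, hNQ⟩ := exists_opNorm_word_le hN A hN.toSeminorm (fun x => (hN.eq_zero_iff x).1)
    hQ0 fun i x => (le_opNorm_mul hN (A i) x).trans <|
      mul_le_mul_of_nonneg_right (Finset.single_le_sum (f := fun i => opNorm N (A i))
        (fun i _ => opNorm_nonneg hN _) (Finset.mem_univ i)) (hN.nonneg x)
  obtain ⟨c, hc, hρN⟩ := exists_specRad_le hN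
  have hρQ : ∀ n (σ : Fin n → Fin m), specRad (word A n σ) ≤ c * a * Q ^ n := fun n σ => by
    rw [mul_assoc]
    exact (hρN _).trans (mul_le_mul_of_nonneg_left (hNQ n σ) hc.le)
  refine le_antisymm (le_of_forall_gt_imp_ge_of_dense fun s hs => ?_)
    (le_of_forall_gt_imp_ge_of_dense fun s hs => ?_)
  · have hs0 := (limsup_rootMax_nonneg hN0 ha hQ0 hNQ).trans hs.le
    refine limsup_rootMax_le hρ0 hc hs0 ?_
    filter_upwards [eventually_le_pow hN0 ha hQ0 hNQ hs] with n hn σ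
    exact (hρN _).trans (mul_le_mul_of_nonneg_left (hn σ) hc.le)
  · have hg0 := limsup_rootMax_nonneg hρ0 (mul_pos hc ha) hQ0 hρQ
    obtain ⟨r, hgr, hrs⟩ := exists_between hs
    have hr0 : 0 < r := hg0.trans_lt hgr
    obtain ⟨C, hC⟩ := specBound_of_eventually A (mul_pos hc ha).le hQ0 hr0 hρQ
      (eventually_le_pow hρ0 (mul_pos hc ha) hQ0 hρQ hgr)
    obtain ⟨p, hp, hpA⟩ := exists_norm_of_specBound _ _ C r s rfl hr0.le hrs hC
    have hs0 : 0 ≤ s := (hr0.trans hrs).le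
    obtain ⟨b, hb, hNb⟩ := exists_opNorm_word_le hN A p hp hs0 hpA
    exact limsup_rootMax_le hN0 hb hs0 (.of_forall hNb)
end

section
/- (Barabanov's Theorem, existence direction.) If the family 𝒜 = (A_0, …, A_{m−1}) is irreducible, then there exists a norm ν on ℝ^d such that ρ(𝒜)·ν(x) = max_{0≤i≤m−1} ν(A_i x) for all x ∈ ℝ^d, where ρ(𝒜) is the joint spectral radius of 𝒜. -/
/-! Let `T φ x = max_i φ (A_i x)`, so that `T^n N x` is the largest `N`-length of `A_σ x` over the
words `σ` of length `n`; `ρ` is the joint spectral radius.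

If every nonzero `x` had some `n ≥ 1` with `T^n N x > ρ^n N x`, compactness of the sphere would
allow replacing `ρ` by one `r > ρ` for all `x`, and concatenating words would give arbitrarily long
words growing at rate `r`, which is absurd (`exists_gt_le_jsr`). Hence the invariant subspace of
those `x` for which `T^n N x / ρ^n` is bounded is nonzero, and by irreducibility it is everything
(`bounded_orbits`). When `ρ = 0` this forces all `A_i = 0` and any norm will do.

When `ρ > 0`, the function `v = sup_n T^n N / ρ^n` satisfies `T v ≤ ρ v`, so `T^n v / ρ^n` decreases
to a seminorm `ν`, and passing to the limit in `T (T^n v / ρ^n) = ρ T^(n+1) v / ρ^(n+1)` gives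
`T ν = ρ ν`. The kernel of `ν` is an invariant subspace. It is not everything: otherwise
`T^n v / ρ^n` would tend to `0` uniformly on the sphere, so `T^n N ≤ (ρ^n / 2) N` for some `n ≥ 1`,
and submultiplicativity would make the joint spectral radius smaller than `ρ`. So it is trivial and
`ν` is a norm. -/

open Filter Topology

/-- The family `𝒜` is irreducible: the only invariant subspaces are `{0}` and `ℝ^d`. -/
def FamIrreducible {d m : ℕ} (A : Fin m → Matrix (Fin d) (Fin d) ℝ) : Prop :=
  ∀ V : Submodule ℝ (Fin d → ℝ),
    (∀ i : Fin m, ∀ x ∈ V, (A i).mulVec x ∈ V) → V = ⊥ ∨ V = ⊤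

/-- `ν` is a Barabanov norm for the family `𝒜` with constant `ρ`:
`ρ·ν(x) = max_i ν(A_i x)` for all `x`. -/
def IsBarabanovNorm {d m : ℕ} (A : Fin m → Matrix (Fin d) (Fin d) ℝ)
    (ν : (Fin d → ℝ) → ℝ) (ρ : ℝ) : Prop :=
  IsNorm d ν ∧ 0 ≤ ρ ∧ ∀ x, ρ * ν x = ⨆ i : Fin m, ν ((A i).mulVec x)

namespace Barabanov

variable {d m : ℕ}

/-! ### Seminorms on `ℝ^d` -/

/-- `φ` is a seminorm on `ℝ^d`; nonnegativity follows from the two axioms. -/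
structure IsSemi (φ : (Fin d → ℝ) → ℝ) : Prop where
  add_le : ∀ x y, φ (x + y) ≤ φ x + φ y
  smul_eq : ∀ (a : ℝ) (x), φ (a • x) = |a| * φ x

lemma _root_.IsNorm.semi {N : (Fin d → ℝ) → ℝ} (hN : IsNorm d N) : IsSemi N :=
  ⟨hN.add_le, hN.smul_eq⟩

lemma IsSemi.zero {φ : (Fin d → ℝ) → ℝ} (h : IsSemi φ) : φ 0 = 0 := by
  simpa using h.smul_eq 0 0

lemma IsSemi.nonneg {φ : (Fin d → ℝ) → ℝ} (h : IsSemi φ) (x) : 0 ≤ φ x := by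
  have h1 := h.add_le x ((-1 : ℝ) • x)
  rw [h.smul_eq] at h1
  have h2 : x + (-1 : ℝ) • x = 0 := by simp
  rw [h2, h.zero] at h1
  norm_num at h1
  linarith

lemma IsSemi.le_sum {φ : (Fin d → ℝ) → ℝ} (h : IsSemi φ) (x : Fin d → ℝ) :
    φ x ≤ (∑ j, φ (Pi.single j 1)) * ‖x‖ := by
  have key : ∀ (s : Finset (Fin d)) (f : Fin d → Fin d → ℝ),
      φ (∑ j ∈ s, f j) ≤ ∑ j ∈ s, φ (f j) := by
    intro s f
    exact Finset.le_sum_of_subadditive φ h.zero.le h.add_le s f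
  have hx : x = ∑ j, x j • (Pi.single j (1 : ℝ) : Fin d → ℝ) := by
    ext i; simp [Finset.sum_apply, Pi.single_apply]
  calc φ x = φ (∑ j, x j • (Pi.single j (1 : ℝ) : Fin d → ℝ)) := by rw [← hx]
    _ ≤ ∑ j, φ (x j • (Pi.single j (1 : ℝ) : Fin d → ℝ)) := key _ _
    _ ≤ ∑ j, φ (Pi.single j 1) * ‖x‖ := by
        refine Finset.sum_le_sum fun j _ => ?_
        rw [h.smul_eq, mul_comm]
        exact mul_le_mul_of_nonneg_left (norm_le_pi_norm x j) (h.nonneg _)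
    _ = _ := by rw [Finset.sum_mul]

lemma IsSemi.abs_sub_le {φ : (Fin d → ℝ) → ℝ} (h : IsSemi φ) (x y) :
    |φ x - φ y| ≤ φ (x - y) := by
  have h1 := h.add_le (x - y) y
  have h2 := h.add_le (y - x) x
  have h3 : φ (y - x) = φ (x - y) := by
    have := h.smul_eq (-1) (x - y)
    simpa using this
  rw [sub_add_cancel] at h1 h2
  rw [abs_le]; constructor <;> linarith

lemma IsSemi.continuous {φ : (Fin d → ℝ) → ℝ} (h : IsSemi φ) : Continuous φ := by
  have h0 : 0 ≤ ∑ j, φ (Pi.single j 1) := Finset.sum_nonneg fun j _ => h.nonneg _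
  refine (LipschitzWith.of_dist_le_mul (K := ⟨_, h0⟩) fun x y => ?_).continuous
  rw [Real.dist_eq, dist_eq_norm]
  exact (h.abs_sub_le x y).trans (h.le_sum _)

lemma _root_.IsNorm.pos {N : (Fin d → ℝ) → ℝ} (hN : IsNorm d N) {x} (hx : x ≠ 0) : 0 < N x :=
  lt_of_le_of_ne (hN.semi.nonneg x) fun h => hx ((hN.eq_zero_iff x).1 h.symm)

lemma _root_.IsNorm.exists_le {N : (Fin d → ℝ) → ℝ} (hN : IsNorm d N) :
    ∃ c > 0, ∀ x, ‖x‖ ≤ c * N x := by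
  rcases (Metric.sphere (0 : Fin d → ℝ) 1).eq_empty_or_nonempty with he | hne
  · refine ⟨1, one_pos, fun x => ?_⟩
    by_cases hx : x = 0
    · simp [hx, hN.semi.zero]
    · have : ‖x‖⁻¹ • x ∈ Metric.sphere (0 : Fin d → ℝ) 1 := by
        simp [norm_smul, norm_ne_zero_iff.2 hx]
      simp [he] at this
  · obtain ⟨z, hz, hmin⟩ := (isCompact_sphere (0 : Fin d → ℝ) 1).exists_isMinOn hne
      hN.semi.continuous.continuousOn
    have hz0 : z ≠ 0 := by rintro rfl; simp at hz
    have hp := hN.pos hz0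
    refine ⟨(N z)⁻¹, inv_pos.2 hp, fun x => ?_⟩
    by_cases hx : x = 0
    · simp [hx, hN.semi.zero]
    · have hn := norm_pos_iff.2 hx
      have hm : ‖x‖⁻¹ • x ∈ Metric.sphere (0 : Fin d → ℝ) 1 := by
        simp [norm_smul, norm_ne_zero_iff.2 hx]
      have h1 : N z ≤ N (‖x‖⁻¹ • x) := hmin hm
      rw [hN.smul_eq, abs_of_pos (inv_pos.2 hn)] at h1
      rw [inv_mul_eq_div, le_div_iff₀ hp]
      rw [inv_mul_eq_div, le_div_iff₀ hn] at h1
      linarith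

/-- The set where a seminorm vanishes. -/
def IsSemi.ker {φ : (Fin d → ℝ) → ℝ} (h : IsSemi φ) : Submodule ℝ (Fin d → ℝ) where
  carrier := {x | φ x = 0}
  zero_mem' := h.zero
  add_mem' {x y} hx hy := by
    have := h.add_le x y
    simp only [Set.mem_ofPred_eq] at hx hy ⊢
    exact le_antisymm (by linarith) (h.nonneg _)
  smul_mem' a x hx := by
    simp only [Set.mem_ofPred_eq] at hx ⊢
    rw [h.smul_eq, hx, mul_zero]

/-! ### The maximum operator -/

/-- The operator `(T φ) x = max_i φ (A_i x)` on functions `ℝ^d → ℝ`. -/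
noncomputable def T (A : Fin m → Matrix (Fin d) (Fin d) ℝ) (φ : (Fin d → ℝ) → ℝ) :
    (Fin d → ℝ) → ℝ :=
  fun x => ⨆ i : Fin m, φ ((A i).mulVec x)

variable {A : Fin m → Matrix (Fin d) (Fin d) ℝ}

lemma le_T (φ : (Fin d → ℝ) → ℝ) (i : Fin m) (x) : φ ((A i).mulVec x) ≤ T A φ x :=
  le_ciSup (f := fun i => φ ((A i).mulVec x)) (Set.finite_range _).bddAbove i

lemma T_attained [Nonempty (Fin m)] (φ : (Fin d → ℝ) → ℝ) (x) :
    ∃ i, T A φ x = φ ((A i).mulVec x) := by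
  obtain ⟨i, hi⟩ := exists_eq_ciSup_of_finite (f := fun i => φ ((A i).mulVec x))
  exact ⟨i, hi.symm⟩

lemma T_mono [Nonempty (Fin m)] {φ ψ : (Fin d → ℝ) → ℝ} (h : ∀ x, φ x ≤ ψ x) (x) :
    T A φ x ≤ T A ψ x := by
  obtain ⟨i, hi⟩ := T_attained (A := A) φ x
  rw [hi]; exact (h _).trans (le_T ψ i x)

lemma T_smul (c : ℝ) (hc : 0 ≤ c) (φ : (Fin d → ℝ) → ℝ) (x) :
    T A (fun y => c * φ y) x = c * T A φ x :=
  (Real.mul_iSup_of_nonneg hc _).symm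

lemma T_semi [Nonempty (Fin m)] {φ : (Fin d → ℝ) → ℝ} (h : IsSemi φ) : IsSemi (T A φ) := by
  refine ⟨fun x y => ?_, fun a x => ?_⟩
  · obtain ⟨i, hi⟩ := T_attained (A := A) φ (x + y)
    rw [hi, Matrix.mulVec_add]
    exact (h.add_le _ _).trans (add_le_add (le_T φ i x) (le_T φ i y))
  · rw [← T_smul _ (abs_nonneg a)]
    simp only [T, Matrix.mulVec_smul, h.smul_eq]

lemma Tn_mono [Nonempty (Fin m)] (n : ℕ) {φ ψ : (Fin d → ℝ) → ℝ} (h : ∀ x, φ x ≤ ψ x) :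
    ∀ x, (T A)^[n] φ x ≤ (T A)^[n] ψ x := by
  induction n generalizing φ ψ with
  | zero => simpa using h
  | succ n ih =>
    simp only [Function.iterate_succ, Function.comp]
    exact ih (T_mono h)

lemma Tn_smul (n : ℕ) (c : ℝ) (hc : 0 ≤ c) (φ : (Fin d → ℝ) → ℝ) (x) :
    (T A)^[n] (fun y => c * φ y) x = c * (T A)^[n] φ x := by
  induction n generalizing φ with
  | zero => simp
  | succ n ih =>
    simp only [Function.iterate_succ, Function.comp]
    have hT : T A (fun y => c * φ y) = fun y => c * T A φ y := funext (T_smul c hc φ)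
    rw [hT, ih]

lemma Tn_semi [Nonempty (Fin m)] (n : ℕ) {φ : (Fin d → ℝ) → ℝ} (h : IsSemi φ) :
    IsSemi ((T A)^[n] φ) := by
  induction n generalizing φ with
  | zero => simpa using h
  | succ n ih => exact ih (T_semi h)

lemma Tn_succ (n : ℕ) (φ : (Fin d → ℝ) → ℝ) (x) :
    (T A)^[n + 1] φ x = T A ((T A)^[n] φ) x := by
  rw [Function.iterate_succ', Function.comp]

/-- A maximizing point `y = A_σ x`; being of this form, `y` bounds `T^n ψ x` below for every `ψ`. -/
lemma Tn_attained [Nonempty (Fin m)] (n : ℕ) (φ : (Fin d → ℝ) → ℝ) (x) :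
    ∃ y, (T A)^[n] φ x = φ y ∧ ∀ ψ : (Fin d → ℝ) → ℝ, ψ y ≤ (T A)^[n] ψ x := by
  induction n generalizing x with
  | zero => exact ⟨x, rfl, fun _ => le_rfl⟩
  | succ n ih =>
    obtain ⟨i, hi⟩ := T_attained (A := A) ((T A)^[n] φ) x
    obtain ⟨y, hy, hy'⟩ := ih ((A i).mulVec x)
    refine ⟨y, by rw [Tn_succ, hi, hy], fun ψ => ?_⟩
    rw [Tn_succ]
    exact (hy' ψ).trans (le_T _ i x)

lemma word_succ (n : ℕ) (σ : Fin (n + 1) → Fin m) :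
    word A (n + 1) σ = word A n (fun i => σ i.succ) * A (σ 0) := by
  simp [word, List.ofFn_succ]

lemma word_le_Tn (n : ℕ) (φ : (Fin d → ℝ) → ℝ) (σ : Fin n → Fin m) (x) :
    φ ((word A n σ).mulVec x) ≤ (T A)^[n] φ x := by
  induction n generalizing x with
  | zero => simp [word]
  | succ n ih =>
    rw [word_succ, ← Matrix.mulVec_mulVec, Tn_succ]
    exact (ih _ _).trans (le_T _ _ x)

lemma Tn_word [Nonempty (Fin m)] (n : ℕ) (φ : (Fin d → ℝ) → ℝ) (x) :
    ∃ σ : Fin n → Fin m, (T A)^[n] φ x = φ ((word A n σ).mulVec x) := by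
  induction n generalizing x with
  | zero => exact ⟨Fin.elim0, by simp [word]⟩
  | succ n ih =>
    obtain ⟨i, hi⟩ := T_attained (A := A) ((T A)^[n] φ) x
    obtain ⟨σ, hσ⟩ := ih ((A i).mulVec x)
    refine ⟨Fin.cons i σ, ?_⟩
    rw [Tn_succ, hi, hσ, word_succ, ← Matrix.mulVec_mulVec]
    simp

/-! ### Growth rates and the joint spectral radius -/

lemma exists_growth_bound [Nonempty (Fin m)] {N : (Fin d → ℝ) → ℝ} (hN : IsNorm d N)
    (A : Fin m → Matrix (Fin d) (Fin d) ℝ) :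
    ∃ K, 1 ≤ K ∧ ∀ n x, (T A)^[n] N x ≤ K ^ n * N x := by
  obtain ⟨c, hc, hcN⟩ := hN.exists_le
  have hs := T_semi (A := A) hN.semi
  set S := ∑ j, T A N (Pi.single j 1)
  have hS : 0 ≤ S := Finset.sum_nonneg fun j _ => hs.nonneg _
  have h1 : ∀ x, T A N x ≤ (S * c + 1) * N x := fun x => by
    have h2 := hs.le_sum x
    have h3 := mul_le_mul_of_nonneg_left (hcN x) hS
    have := hN.semi.nonneg x
    nlinarith
  have hK : 1 ≤ S * c + 1 := by nlinarith
  refine ⟨S * c + 1, hK, fun n => ?_⟩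
  induction n with
  | zero => simp
  | succ n ih =>
    intro x
    have hp : 0 ≤ (S * c + 1) ^ n := by positivity
    rw [Tn_succ]
    calc T A ((T A)^[n] N) x ≤ T A (fun y => (S * c + 1) ^ n * N y) x := T_mono ih x
      _ = (S * c + 1) ^ n * T A N x := T_smul _ hp _ _
      _ ≤ (S * c + 1) ^ n * ((S * c + 1) * N x) := mul_le_mul_of_nonneg_left (h1 x) hp
      _ = _ := by ring

lemma opNorm_nonneg {N : (Fin d → ℝ) → ℝ} (hN : IsNorm d N) (B : Matrix (Fin d) (Fin d) ℝ) :
    0 ≤ opNorm N B :=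
  Real.iSup_nonneg fun _ => div_nonneg (hN.semi.nonneg _) (hN.semi.nonneg _)

lemma rhoN_nonneg {N : (Fin d → ℝ) → ℝ} (hN : IsNorm d N) (n : ℕ) : 0 ≤ rhoN N A n :=
  Real.iSup_nonneg fun _ => Real.rpow_nonneg (opNorm_nonneg hN _) _

lemma rhoN_le {N : (Fin d → ℝ) → ℝ} (hN : IsNorm d N) {n : ℕ} {C : ℝ}
    (hC : 0 ≤ C) (h : ∀ x, (T A)^[n] N x ≤ C * N x) : rhoN N A n ≤ C ^ ((n : ℝ)⁻¹) := by
  refine Real.iSup_le (fun σ => ?_) (Real.rpow_nonneg hC _)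
  refine Real.rpow_le_rpow (opNorm_nonneg hN _) ?_ (by positivity)
  refine Real.iSup_le (fun x => ?_) hC
  rw [div_le_iff₀ (hN.pos x.2)]
  exact (word_le_Tn n N σ x.1).trans (h _)

lemma rhoN_bdd [Nonempty (Fin m)] {N : (Fin d → ℝ) → ℝ} (hN : IsNorm d N) :
    IsBoundedUnder (· ≤ ·) atTop (rhoN N A) := by
  obtain ⟨K, hK, h⟩ := exists_growth_bound hN A
  refine isBoundedUnder_of_eventually_le (a := K) ?_
  filter_upwards [eventually_ge_atTop 1] with n hn
  have := rhoN_le hN (by positivity) (h n)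
  rwa [Real.pow_rpow_inv_natCast (by positivity) (by omega)] at this

/-- Stretching by `r ^ n` for arbitrarily large `n` suffices since the joint spectral radius is a
limsup. -/
lemma le_jsr [Nonempty (Fin m)] {N : (Fin d → ℝ) → ℝ} (hN : IsNorm d N) {r : ℝ} (hr : 0 ≤ r)
    (h : ∀ k : ℕ, ∃ n, k ≤ n ∧ ∃ x, x ≠ 0 ∧ r ^ n * N x ≤ (T A)^[n] N x) : r ≤ jsr N A := by
  refine le_limsup_of_frequently_le ?_ (rhoN_bdd hN)
  rw [frequently_atTop]
  intro k
  obtain ⟨n, hn, x, hx, hle⟩ := h (k + 1)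
  refine ⟨n, by omega, ?_⟩
  obtain ⟨K, hK, hb⟩ := exists_growth_bound hN A
  obtain ⟨σ, hσ⟩ := Tn_word (A := A) n N x
  have h1 : r ^ n ≤ opNorm N (word A n σ) := by
    have hbdd : BddAbove (Set.range fun x : {x : Fin d → ℝ // x ≠ 0} =>
        N ((word A n σ).mulVec x.1) / N x.1) := by
      refine ⟨K ^ n, ?_⟩
      rintro _ ⟨y, rfl⟩
      simp only
      rw [div_le_iff₀ (hN.pos y.2)]
      exact (word_le_Tn n N σ y.1).trans (hb _ _)
    refine le_trans ?_ (le_ciSup hbdd ⟨x, hx⟩)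
    rw [le_div_iff₀ (hN.pos hx), ← hσ]
    exact hle
  have h2 : r ≤ opNorm N (word A n σ) ^ ((n : ℝ)⁻¹) := by
    rw [← Real.pow_rpow_inv_natCast hr (show n ≠ 0 by omega)]
    exact Real.rpow_le_rpow (by positivity) h1 (by positivity)
  exact h2.trans (le_ciSup (f := fun σ : Fin n → Fin m => opNorm N (word A n σ) ^ ((n : ℝ)⁻¹))
    (Set.finite_range _).bddAbove σ)

lemma jsr_le {N : (Fin d → ℝ) → ℝ} (hN : IsNorm d N) {r C : ℝ}
    (hr : 0 < r) (hC : 0 < C) (h : ∀ n x, (T A)^[n] N x ≤ C * r ^ n * N x) : jsr N A ≤ r := by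
  have h1 : ∀ᶠ n in atTop, rhoN N A n ≤ C ^ ((n : ℝ)⁻¹) * r := by
    filter_upwards [eventually_ge_atTop 1] with n hn
    have := rhoN_le hN (by positivity) (h n)
    rwa [Real.mul_rpow hC.le (by positivity),
      Real.pow_rpow_inv_natCast hr.le (by omega)] at this
  have h2 : Tendsto (fun n : ℕ => C ^ ((n : ℝ)⁻¹) * r) atTop (𝓝 r) := by
    have h3 : Tendsto (fun n : ℕ => C ^ ((n : ℝ)⁻¹)) atTop (𝓝 (C ^ (0 : ℝ))) :=
      (Real.continuous_const_rpow hC.ne').continuousAt.tendsto.comp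
        tendsto_inv_atTop_nhds_zero_nat
    simpa using h3.mul_const r
  rw [← h2.limsup_eq]
  refine limsup_le_limsup h1 ?_ h2.isBoundedUnder_le
  exact (isBoundedUnder_of ⟨0, fun n => rhoN_nonneg hN n⟩ :
    IsBoundedUnder (· ≥ ·) atTop (rhoN N A)).isCoboundedUnder_le

/-- If every nonzero vector is stretched by more than `r ^ n` by some nonempty word of length `n`,
then by compactness the joint spectral radius exceeds `r`. -/
lemma exists_gt_le_jsr [Nonempty (Fin m)] {N : (Fin d → ℝ) → ℝ} (hd : 1 ≤ d) (hN : IsNorm d N)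
    {r : ℝ} (hr : 0 ≤ r)
    (h : ∀ x, x ≠ 0 → ∃ n, 1 ≤ n ∧ r ^ n * N x < (T A)^[n] N x) : r < jsr N A := by
  let U : ℕ → Set (Fin d → ℝ) := fun k =>
    ⋃ n : ℕ, {x | 1 ≤ n ∧ (r + 1 / ((k : ℝ) + 1)) ^ n * N x < (T A)^[n] N x}
  have hUo : ∀ k, IsOpen (U k) := fun k => by
    refine isOpen_iUnion fun n => ?_
    refine IsOpen.and isOpen_const ?_
    exact isOpen_lt (continuous_const.mul hN.semi.continuous) (Tn_semi n hN.semi).continuous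
  have hUmono : Monotone U := by
    intro k l hkl x hx
    simp only [U, Set.mem_iUnion, Set.mem_ofPred_eq] at hx ⊢
    obtain ⟨n, hn, hlt⟩ := hx
    refine ⟨n, hn, lt_of_le_of_lt ?_ hlt⟩
    refine mul_le_mul_of_nonneg_right ?_ (hN.semi.nonneg _)
    refine pow_le_pow_left₀ (by positivity) ?_ n
    have := Nat.one_div_le_one_div (α := ℝ) hkl
    linarith
  have hcov : Metric.sphere (0 : Fin d → ℝ) 1 ⊆ ⋃ k, U k := by
    intro x hx
    have hx0 : x ≠ 0 := by rintro rfl; simp at hx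
    obtain ⟨n, hn, hlt⟩ := h x hx0
    have ht : Tendsto (fun k : ℕ => (r + 1 / ((k : ℝ) + 1)) ^ n * N x) atTop (𝓝 (r ^ n * N x)) := by
      have := ((tendsto_one_div_add_atTop_nhds_zero_nat (𝕜 := ℝ)).const_add r).pow n
      rw [add_zero] at this
      exact this.mul_const _
    obtain ⟨k, hk⟩ := (ht.eventually_lt_const hlt).exists
    simp only [U, Set.mem_iUnion, Set.mem_ofPred_eq]
    exact ⟨k, n, hn, hk⟩
  obtain ⟨k, hk⟩ := (isCompact_sphere (0 : Fin d → ℝ) 1).elim_directed_cover U hUo hcov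
    hUmono.directed_le
  -- A single rate `s > r` now works for every nonzero vector.
  set s := r + 1 / ((k : ℝ) + 1) with hs
  have hrs : r < s := by
    have : 0 < 1 / ((k : ℝ) + 1) := by positivity
    linarith
  have hs0 : 0 < s := hr.trans_lt hrs
  have hstep : ∀ x, x ≠ 0 → ∃ n, 1 ≤ n ∧ s ^ n * N x < (T A)^[n] N x := by
    intro x hx
    have hn0 := norm_pos_iff.2 hx
    have hmem : ‖x‖⁻¹ • x ∈ Metric.sphere (0 : Fin d → ℝ) 1 := by
      simp [norm_smul, norm_ne_zero_iff.2 hx]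
    have := hk hmem
    simp only [U, Set.mem_iUnion, Set.mem_ofPred_eq] at this
    obtain ⟨n, hn, hlt⟩ := this
    refine ⟨n, hn, ?_⟩
    rw [hN.smul_eq, (Tn_semi n hN.semi).smul_eq, mul_left_comm] at hlt
    exact lt_of_mul_lt_mul_left hlt (abs_nonneg _)
  have hiter : ∀ k : ℕ, ∀ x, x ≠ 0 → ∃ n, k ≤ n ∧ s ^ n * N x ≤ (T A)^[n] N x := by
    intro k
    induction k with
    | zero => exact fun x _ => ⟨0, le_rfl, by simp⟩
    | succ k ih =>
      intro x hx
      obtain ⟨n, hn, hlt⟩ := hstep x hx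
      obtain ⟨y, hy, hy'⟩ := Tn_attained (A := A) n N x
      have hpos : 0 < N y := by
        rw [← hy]
        exact lt_of_le_of_lt (mul_nonneg (by positivity) (hN.semi.nonneg _)) hlt
      have hy0 : y ≠ 0 := by rintro rfl; simp [hN.semi.zero] at hpos
      obtain ⟨l, hl, hle⟩ := ih y hy0
      refine ⟨n + l, by omega, ?_⟩
      rw [Function.iterate_add, Function.comp]
      refine le_trans ?_ (hy' _)
      refine le_trans ?_ hle
      rw [← hy, pow_add, mul_right_comm, mul_comm]
      exact mul_le_mul_of_nonneg_left hlt.le (by positivity)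
  have : Nonempty (Fin d) := ⟨⟨0, hd⟩⟩
  refine hrs.trans_le (le_jsr hN hs0.le fun k => ?_)
  obtain ⟨x, hx⟩ := exists_ne (0 : Fin d → ℝ)
  obtain ⟨n, hn, hle⟩ := hiter k x hx
  exact ⟨n, hn, x, hx, hle⟩

lemma jsr_nonneg [Nonempty (Fin m)] {N : (Fin d → ℝ) → ℝ} (hd : 1 ≤ d) (hN : IsNorm d N) :
    0 ≤ jsr N A := by
  have : Nonempty (Fin d) := ⟨⟨0, hd⟩⟩
  obtain ⟨x, hx⟩ := exists_ne (0 : Fin d → ℝ)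
  refine le_jsr hN le_rfl fun k => ⟨k + 1, by omega, x, hx, ?_⟩
  simpa using (Tn_semi (k + 1) hN.semi).nonneg x

/-- For an irreducible family, every orbit grows at most like `ρ ^ n`. -/
lemma bounded_orbits [Nonempty (Fin m)] {N : (Fin d → ℝ) → ℝ} (hd : 1 ≤ d) (hN : IsNorm d N)
    (hirr : FamIrreducible A) (x) : ∃ C, ∀ n, (T A)^[n] N x ≤ C * jsr N A ^ n := by
  have hρ := jsr_nonneg (A := A) hd hN
  let W : Submodule ℝ (Fin d → ℝ) :=
    { carrier := {x | ∃ C, ∀ n, (T A)^[n] N x ≤ C * jsr N A ^ n}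
      zero_mem' := ⟨0, fun n => by simp [(Tn_semi n hN.semi).zero]⟩
      add_mem' := by
        rintro x y ⟨C, hC⟩ ⟨D, hD⟩
        refine ⟨C + D, fun n => ((Tn_semi n hN.semi).add_le x y).trans ?_⟩
        rw [add_mul]
        exact add_le_add (hC n) (hD n)
      smul_mem' := by
        rintro a x ⟨C, hC⟩
        refine ⟨|a| * C, fun n => ?_⟩
        rw [(Tn_semi n hN.semi).smul_eq, mul_assoc]
        exact mul_le_mul_of_nonneg_left (hC n) (abs_nonneg a) }
  have hinv : ∀ i : Fin m, ∀ x ∈ W, (A i).mulVec x ∈ W := by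
    rintro i x ⟨C, hC⟩
    refine ⟨C * jsr N A, fun n => ?_⟩
    have := hC (n + 1)
    rw [Tn_succ, pow_succ'] at this
    rw [mul_assoc]
    exact (le_T _ i x).trans this
  have hne : ∃ x, x ≠ 0 ∧ x ∈ W := by
    by_contra! hcon
    refine lt_irrefl _ (exists_gt_le_jsr (A := A) hd hN hρ fun x hx => ?_)
    by_contra! hb
    refine hcon x hx ⟨N x, fun n => ?_⟩
    rcases Nat.eq_zero_or_pos n with rfl | hn
    · simp
    · rw [mul_comm]; exact hb n hn
  rcases hirr W hinv with h | h
  · obtain ⟨x, hx, hxW⟩ := hne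
    rw [h] at hxW
    exact absurd ((Submodule.mem_bot ℝ).1 hxW) hx
  · have : x ∈ W := by rw [h]; trivial
    exact this

/-- Contraction by half the rate at a single positive length bounds the joint spectral radius
strictly. -/
lemma jsr_lt_of_contract [Nonempty (Fin m)] {N : (Fin d → ℝ) → ℝ} (hN : IsNorm d N)
    {r : ℝ} (hr : 0 < r) {k : ℕ} (hk : 1 ≤ k)
    (h : ∀ x, (T A)^[k] N x ≤ r ^ k / 2 * N x) : jsr N A < r := by
  set q : ℝ := (1 / 2 : ℝ) ^ ((k : ℝ)⁻¹)
  have hq0 : 0 < q := by positivity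
  have hq1 : q < 1 := Real.rpow_lt_one (by norm_num) (by norm_num) (by positivity)
  have hqk : q ^ k = 1 / 2 := Real.rpow_inv_natCast_pow (by norm_num) (by omega)
  set s := r * q
  have hs : 0 < s := by positivity
  have hsk : r ^ k / 2 = s ^ k := by rw [mul_pow, hqk]; ring
  rw [hsk] at h
  obtain ⟨K, hK, hb⟩ := exists_growth_bound hN A
  -- `M ^ k` absorbs the growth `K ^ n` of the lengths `n < k`.
  set M := max 1 (K / s)
  have hM : 1 ≤ M := le_max_left _ _
  have hKM : K ≤ M * s := (div_le_iff₀ hs).1 (le_max_right _ _)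
  have hall : ∀ n x, (T A)^[n] N x ≤ M ^ k * s ^ n * N x := by
    intro n
    induction n using Nat.strong_induction_on with
    | _ n ih =>
      intro x
      have hNx := hN.semi.nonneg x
      rcases lt_or_ge n k with hnk | hnk
      · refine (hb n x).trans (mul_le_mul_of_nonneg_right ?_ hNx)
        calc K ^ n ≤ (M * s) ^ n := pow_le_pow_left₀ (by positivity) hKM n
          _ = M ^ n * s ^ n := mul_pow _ _ _
          _ ≤ M ^ k * s ^ n :=
            mul_le_mul_of_nonneg_right (pow_le_pow_right₀ hM hnk.le) (by positivity)
      · obtain ⟨l, rfl⟩ := Nat.exists_eq_add_of_le' hnk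
        rw [Function.iterate_add, Function.comp]
        calc (T A)^[l] ((T A)^[k] N) x ≤ (T A)^[l] (fun y => s ^ k * N y) x := Tn_mono l h x
          _ = s ^ k * (T A)^[l] N x := Tn_smul _ _ (by positivity) _ _
          _ ≤ s ^ k * (M ^ k * s ^ l * N x) :=
            mul_le_mul_of_nonneg_left (ih l (by omega) x) (by positivity)
          _ = _ := by rw [pow_add]; ring
  have := jsr_le hN hs (by positivity) hall
  nlinarith

/-! ### Construction of the Barabanov norm -/

/-- For `ρ > 0` there is an extremal norm: the supremum of `T^n N / ρ^n`, which is finite by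
`bounded_orbits`. -/
lemma exists_extremal [Nonempty (Fin m)] {N : (Fin d → ℝ) → ℝ} (hd : 1 ≤ d) (hN : IsNorm d N)
    (hirr : FamIrreducible A) (hρ : 0 < jsr N A) :
    ∃ v, IsSemi v ∧ (∀ x, N x ≤ v x) ∧ ∀ x, T A v x ≤ jsr N A * v x := by
  set ρ := jsr N A with hρd
  have hbdd : ∀ x, BddAbove (Set.range fun n => (T A)^[n] N x / ρ ^ n) := by
    intro x
    obtain ⟨C, hC⟩ := bounded_orbits hd hN hirr x
    refine ⟨C, ?_⟩
    rintro _ ⟨n, rfl⟩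
    simp only
    rw [div_le_iff₀ (by positivity)]
    exact hC n
  refine ⟨fun x => ⨆ n, (T A)^[n] N x / ρ ^ n, ⟨fun x y => ?_, fun a x => ?_⟩, fun x => ?_,
    fun x => ?_⟩
  · refine ciSup_le fun n => ?_
    refine le_trans ?_ (add_le_add (le_ciSup (hbdd x) n) (le_ciSup (hbdd y) n))
    rw [← add_div]
    exact div_le_div_of_nonneg_right ((Tn_semi n hN.semi).add_le x y) (by positivity)
  · rw [Real.mul_iSup_of_nonneg (abs_nonneg a)]
    congr 1
    funext n
    rw [(Tn_semi n hN.semi).smul_eq, mul_div_assoc]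
  · simpa using le_ciSup (hbdd x) 0
  · refine ciSup_le fun i => ciSup_le fun n => ?_
    have h1 := le_ciSup (hbdd x) (n + 1)
    have h2 : (T A)^[n] N ((A i).mulVec x) ≤ (T A)^[n + 1] N x := by
      rw [Tn_succ]; exact le_T _ i x
    calc (T A)^[n] N ((A i).mulVec x) / ρ ^ n ≤ (T A)^[n + 1] N x / ρ ^ n :=
          div_le_div_of_nonneg_right h2 (by positivity)
      _ = ρ * ((T A)^[n + 1] N x / ρ ^ (n + 1)) := by field_simp; ring
      _ ≤ _ := mul_le_mul_of_nonneg_left h1 hρ.le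

/-- The limit of `T^n v / ρ^n` is a seminorm which is an eigenfunction of `T`; it exists because
the sequence is nonnegative and, by `T v ≤ ρ v`, decreasing. -/
lemma exists_limit [Nonempty (Fin m)] {v : (Fin d → ℝ) → ℝ} (hv : IsSemi v) {ρ : ℝ} (hρ : 0 < ρ)
    (hT : ∀ x, T A v x ≤ ρ * v x) :
    ∃ ν, IsSemi ν ∧ (∀ x, ρ * ν x = T A ν x) ∧
      ∀ x, Tendsto (fun n => (T A)^[n] v x / ρ ^ n) atTop (𝓝 (ν x)) := by
  have hanti : ∀ x, Antitone fun n => (T A)^[n] v x / ρ ^ n := by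
    refine fun x => antitone_nat_of_succ_le fun n => ?_
    have h1 : (T A)^[n + 1] v x ≤ ρ * (T A)^[n] v x := by
      rw [← Tn_smul n ρ hρ.le]
      exact Tn_mono n hT x
    rw [div_le_div_iff₀ (by positivity) (by positivity), pow_succ]
    have : 0 ≤ ρ ^ n := by positivity
    nlinarith
  have hbb : ∀ x, BddBelow (Set.range fun n => (T A)^[n] v x / ρ ^ n) := by
    refine fun x => ⟨0, ?_⟩
    rintro _ ⟨n, rfl⟩
    exact div_nonneg ((Tn_semi n hv).nonneg x) (by positivity)
  set ν : (Fin d → ℝ) → ℝ := fun x => ⨅ n, (T A)^[n] v x / ρ ^ n with hν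
  have hlim : ∀ x, Tendsto (fun n => (T A)^[n] v x / ρ ^ n) atTop (𝓝 (ν x)) :=
    fun x => tendsto_atTop_ciInf (hanti x) (hbb x)
  refine ⟨ν, ⟨fun x y => ?_, fun a x => ?_⟩, fun x => ?_, hlim⟩
  · refine le_of_tendsto_of_tendsto' (hlim _) ((hlim x).add (hlim y)) fun n => ?_
    rw [← add_div]
    exact div_le_div_of_nonneg_right ((Tn_semi n hv).add_le x y) (by positivity)
  · refine tendsto_nhds_unique (hlim _) (((hlim x).const_mul |a|).congr fun n => ?_)
    rw [(Tn_semi n hv).smul_eq, mul_div_assoc]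
  · have h1 : Tendsto (fun n => ρ * ((T A)^[n + 1] v x / ρ ^ (n + 1))) atTop (𝓝 (ρ * ν x)) :=
      ((hlim x).comp (tendsto_add_atTop_nat 1)).const_mul ρ
    have h2 : Tendsto (fun n => Finset.univ.sup' Finset.univ_nonempty
        fun i : Fin m => (T A)^[n] v ((A i).mulVec x) / ρ ^ n) atTop
        (𝓝 (Finset.univ.sup' Finset.univ_nonempty fun i : Fin m => ν ((A i).mulVec x))) :=
      Tendsto.finset_sup'_nhds_apply _ fun i _ => hlim _
    rw [Finset.sup'_univ_eq_ciSup] at h2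
    refine tendsto_nhds_unique h1 (h2.congr fun n => ?_)
    rw [Finset.sup'_univ_eq_ciSup, Tn_succ]
    have h3 := T_smul (A := A) (ρ ^ n)⁻¹ (by positivity) ((T A)^[n] v) x
    simp only [T] at h3 ⊢
    simp only [div_eq_inv_mul, h3]
    field_simp
    ring

/-- If `T^n v / ρ^n → 0` pointwise for some seminorm `v ≥ N`, the family contracts faster than
`ρ`. -/
lemma jsr_lt_of_tendsto_zero [Nonempty (Fin m)] {N v : (Fin d → ℝ) → ℝ}
    (hN : IsNorm d N) (hv : IsSemi v) (hNv : ∀ x, N x ≤ v x) {ρ : ℝ} (hρ : 0 < ρ)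
    (h : ∀ x, Tendsto (fun n => (T A)^[n] v x / ρ ^ n) atTop (𝓝 0)) : jsr N A < ρ := by
  obtain ⟨c, hc, hcN⟩ := hN.exists_le
  have hsum : Tendsto (fun n => ∑ j : Fin d, (T A)^[n] v (Pi.single j 1) / ρ ^ n) atTop (𝓝 0) := by
    have := tendsto_finsetSum (Finset.univ : Finset (Fin d))
      fun j _ => h (Pi.single j (1 : ℝ))
    simpa using this
  have hε : 0 < 1 / (2 * c) := by positivity
  obtain ⟨n, hlt, hn⟩ :=
    ((hsum.eventually_lt_const hε).and (eventually_ge_atTop 1)).exists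
  refine jsr_lt_of_contract hN hρ hn fun x => ?_
  rw [← Finset.sum_div, div_lt_iff₀ (by positivity)] at hlt
  calc (T A)^[n] N x ≤ (T A)^[n] v x := Tn_mono n hNv x
    _ ≤ (∑ j, (T A)^[n] v (Pi.single j 1)) * ‖x‖ := (Tn_semi n hv).le_sum x
    _ ≤ (1 / (2 * c) * ρ ^ n) * ‖x‖ := mul_le_mul_of_nonneg_right hlt.le (norm_nonneg x)
    _ ≤ (1 / (2 * c) * ρ ^ n) * (c * N x) := mul_le_mul_of_nonneg_left (hcN x) (by positivity)
    _ = _ := by field_simp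

end Barabanov

open Barabanov in
/-- Barabanov's theorem, existence: if `𝒜` is irreducible, then there exists a norm
`ν` with `ρ(𝒜)·ν(x) = max_i ν(A_i x)` for all `x`. -/
theorem stmt7 (d m : ℕ) (hd : 1 ≤ d) (hm : 1 ≤ m)
    (A : Fin m → Matrix (Fin d) (Fin d) ℝ) (hirr : FamIrreducible A)
    (N : (Fin d → ℝ) → ℝ) (hN : IsNorm d N) :
    ∃ ν : (Fin d → ℝ) → ℝ, IsNorm d ν ∧
      ∀ x, jsr N A * ν x = ⨆ i : Fin m, ν ((A i).mulVec x) := by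
  have : Nonempty (Fin m) := ⟨⟨0, hm⟩⟩
  rcases (jsr_nonneg (A := A) hd hN).eq_or_lt with h0 | hρ
  · refine ⟨N, hN, fun x => ?_⟩
    obtain ⟨C, hC⟩ := bounded_orbits hd hN hirr x
    have h1 := hC 1
    rw [← h0] at h1 ⊢
    have h2 : T A N x = 0 :=
      le_antisymm (by simpa using h1) ((T_semi hN.semi).nonneg x)
    rw [zero_mul]
    exact h2.symm
  · obtain ⟨v, hv, hNv, hT⟩ := exists_extremal hd hN hirr hρ
    obtain ⟨ν, hν, heq, hlim⟩ := exists_limit hv hρ hT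
    refine ⟨ν, ⟨fun x => ?_, hν.add_le, hν.smul_eq⟩, heq⟩
    have hinv : ∀ i : Fin m, ∀ x ∈ hν.ker, (A i).mulVec x ∈ hν.ker := by
      intro i x (hx : ν x = 0)
      have h1 := le_T (A := A) ν i x
      rw [← heq, hx, mul_zero] at h1
      exact le_antisymm h1 (hν.nonneg _)
    rcases hirr _ hinv with hb | ht
    · change x ∈ hν.ker ↔ x = 0
      rw [hb, Submodule.mem_bot]
    · refine absurd (jsr_lt_of_tendsto_zero hN hv hNv hρ fun y => ?_) (lt_irrefl _)
      have hy : y ∈ hν.ker := by rw [ht]; trivial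
      have hy' : ν y = 0 := hy
      rw [← hy']
      exact hlim y
end

section
/- (Subword complexity of Sturmian sequences.) Let θ ∈ (0,1) be irrational and η ∈ ℝ, and let σ be the associated Sturmian sequence. Then for every n ≥ 1, the number of distinct factors of σ of length n equals n + 1; that is, the set of words {(σ_m, σ_{m+1}, …, σ_{m+n−1}) : m ∈ ℕ} ⊆ {0,1}^n has cardinality exactly n + 1. -/
/-!
The factor at position `k` is read off the orbit of `x = kθ + η` under the rotation `x ↦ x + θ` of
the circle `ℝ / ℤ`. Its partial sums are `⌊x + jθ⌋ - ⌊x⌋` for `0 ≤ j ≤ n`, and as `x` runs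
through `[0, 1)` these can jump only at the cut points `-jθ mod 1`, of which there are `n + 1`
because `θ` is irrational (`card_cuts`).

The set of factors is the injective image of the set of cuts under `word`. Two words read from
different cuts differ, since at the larger cut one of the partial sums has jumped (`injOn_word`).
Every word equals the one read from the last cut before its starting point
(`exists_cut_word_eq`). Conversely, the word read from a cut is also read from all points
slightly to its right (`exists_right_interval`), and one of these lies on the orbit, because the
forward orbit of an irrational rotation is dense (`exists_orbit_mem_Ioo`).
-/

open Filter Topology

/-- The Sturmian sequence with rotation number `θ` and phase `η`:
`σ_n = ⌊(n+1)θ + η⌋ − ⌊nθ + η⌋`. -/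
noncomputable def sturmian (θ η : ℝ) (n : ℕ) : ℤ :=
  ⌊((n : ℝ) + 1) * θ + η⌋ - ⌊(n : ℝ) * θ + η⌋

namespace Sturm

/-- The word of length `n` read by the rotation by `θ` started at the point `x`: the factor of the
Sturmian sequence at position `k` is `word θ n (k * θ + η)`. -/
noncomputable def word (θ : ℝ) (n : ℕ) (x : ℝ) : Fin n → ℤ :=
  fun i => ⌊x + (i.1 + 1) * θ⌋ - ⌊x + i.1 * θ⌋

/-- The cut points of the circle `[0, 1)`: the representatives of `-jθ` for `j = 0, …, n`.
The point `0` is among them (`j = 0`). -/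
noncomputable def cuts (θ : ℝ) (n : ℕ) : Finset ℝ :=
  (Finset.range (n + 1)).image fun j : ℕ => Int.fract (-((j : ℝ) * θ))

lemma card_cuts {θ : ℝ} (hirr : Irrational θ) (n : ℕ) : (cuts θ n).card = n + 1 := by
  rw [cuts, Finset.card_image_of_injective, Finset.card_range]
  intro i j hij
  obtain ⟨z, hz⟩ := Int.fract_eq_fract.1 hij
  by_contra hne
  have hne' : ((j : ℤ) - i : ℤ) ≠ 0 := by omega
  refine (hirr.intCast_mul hne').ne_int z ?_
  push_cast
  linarith

lemma word_add_int (θ : ℝ) (n : ℕ) (x : ℝ) (m : ℤ) : word θ n (x + m) = word θ n x := by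
  funext i
  simp only [word]
  rw [add_right_comm x m, add_right_comm x m, Int.floor_add_intCast, Int.floor_add_intCast]
  ring

lemma sturmian_eq_word (θ η : ℝ) (n k : ℕ) (i : Fin n) :
    sturmian θ η (k + i.1) = word θ n (k * θ + η) i := by
  simp only [sturmian, word]
  push_cast
  congr 2 <;> ring_nf

lemma word_congr {θ : ℝ} {n : ℕ} {x y : ℝ}
    (h : ∀ j ∈ Finset.range (n + 1), ⌊x + j * θ⌋ = ⌊y + j * θ⌋) : word θ n x = word θ n y := by
  funext i
  have h1 := h (i.1 + 1) (by simp)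
  have h0 := h i.1 (Finset.mem_range.2 (by omega))
  push_cast at h1
  simp only [word, h1, h0]

/-- A word determines its partial sums. -/
lemma floor_sub_eq_of_word_eq {θ : ℝ} {n : ℕ} {x y : ℝ} (h : word θ n x = word θ n y) (j : ℕ)
    (hj : j ≤ n) : ⌊x + j * θ⌋ - ⌊x⌋ = ⌊y + j * θ⌋ - ⌊y⌋ := by
  induction j with
  | zero => simp
  | succ j ih =>
    have h1 := congrFun h ⟨j, hj⟩
    have h0 := ih (by omega)
    simp only [word] at h1
    push_cast
    linarith

/-- If `x < t` are in `[0, 1)` and `t` is the cut point `-jθ`, then `x + jθ` and `t + jθ` have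
different integer parts, since the latter is an integer. -/
lemma word_ne_of_lt {θ : ℝ} {n : ℕ} {x t : ℝ} (hx : 0 ≤ x) (ht : t ∈ cuts θ n) (hxt : x < t) :
    word θ n x ≠ word θ n t := by
  intro h
  obtain ⟨j, hj, rfl⟩ := Finset.mem_image.1 ht
  have hf := floor_sub_eq_of_word_eq h j (by simpa [Nat.lt_succ_iff] using hj)
  have hlt := Int.fract_lt_one (-((j : ℝ) * θ))
  rw [Int.floor_fract, Int.floor_eq_zero_iff.2 ⟨hx, hxt.trans hlt⟩] at hf
  have hint : Int.fract (-((j : ℝ) * θ)) + j * θ = ((-⌊-((j : ℝ) * θ)⌋ : ℤ) : ℝ) := by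
    rw [Int.fract]; push_cast; ring
  rw [hint, Int.floor_intCast, sub_zero, sub_zero] at hf
  have := Int.floor_lt.2 (show x + j * θ < ((-⌊-((j : ℝ) * θ)⌋ : ℤ) : ℝ) by linarith)
  omega

lemma injOn_word (θ : ℝ) (n : ℕ) : Set.InjOn (word θ n) (cuts θ n) := by
  have hnn : ∀ t ∈ cuts θ n, 0 ≤ t := by
    intro t ht
    obtain ⟨j, -, rfl⟩ := Finset.mem_image.1 ht
    exact Int.fract_nonneg _
  intro s hs t ht h
  rcases lt_trichotomy s t with hlt | heq | hlt
  · exact absurd h (word_ne_of_lt (hnn s hs) ht hlt)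
  · exact heq
  · exact absurd h.symm (word_ne_of_lt (hnn t ht) hs hlt)

/-- The word read from `x` is the word read from the last cut point before `x`. -/
lemma exists_cut_word_eq (θ : ℝ) (n : ℕ) (x : ℝ) : ∃ t ∈ cuts θ n, word θ n t = word θ n x := by
  obtain ⟨y, hy0, hy1, hy⟩ : ∃ y : ℝ, 0 ≤ y ∧ y < 1 ∧ word θ n y = word θ n x := by
    refine ⟨Int.fract x, Int.fract_nonneg x, Int.fract_lt_one x, ?_⟩
    rw [← word_add_int θ n (Int.fract x) ⌊x⌋, Int.fract_add_floor]
  rw [← hy]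
  obtain ⟨t, ht, hmax⟩ := ((cuts θ n).filter (· ≤ y)).exists_max_image id
    ⟨0, by simpa [cuts, hy0] using ⟨0, by simp, by simp⟩⟩
  obtain ⟨htc, hty⟩ := Finset.mem_filter.1 ht
  refine ⟨t, htc, word_congr fun j hj => ?_⟩
  have ht0 : 0 ≤ t := by
    obtain ⟨i, -, rfl⟩ := Finset.mem_image.1 htc
    exact Int.fract_nonneg _
  by_contra hne
  have hle : ⌊t + j * θ⌋ ≤ ⌊y + j * θ⌋ := Int.floor_mono (by linarith)
  have h1 := Int.floor_lt.1 (lt_of_le_of_ne hle hne)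
  have h2 := Int.floor_le (y + j * θ)
  -- An integer strictly above `t + jθ` and at most `y + jθ` exhibits `-jθ` as a cut in `(t, y]`.
  have hcut : Int.fract (-((j : ℝ) * θ)) = ⌊y + j * θ⌋ - j * θ := by
    refine Int.fract_eq_iff.2 ⟨by linarith, by linarith, -⌊y + j * θ⌋, ?_⟩
    push_cast; ring
  have := hmax (⌊y + j * θ⌋ - j * θ) (Finset.mem_filter.2
    ⟨Finset.mem_image.2 ⟨j, hj, hcut⟩, by linarith⟩)
  simp only [id] at this
  linarith

/-- The forward orbit of a rotation by an irrational number meets every interval modulo `1`. -/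
lemma exists_orbit_mem_Ioo {θ : ℝ} (hirr : Irrational θ) (η : ℝ) {a b : ℝ} (hab : a < b) :
    ∃ (k : ℕ) (m : ℤ), k * θ + η + m ∈ Set.Ioo a b := by
  have hd : DenseRange (· • (θ : AddCircle (1 : ℝ)) : ℕ → AddCircle (1 : ℝ)) := by
    rw [← denseRange_zsmul_iff_nsmul]
    exact AddCircle.denseRange_zsmul_coe_iff.2 (by simpa using hirr)
  have hopen : IsOpen ((fun y : ℝ => (y : AddCircle (1 : ℝ))) '' Set.Ioo (a - η) (b - η)) :=
    QuotientAddGroup.isOpenMap_coe _ isOpen_Ioo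
  obtain ⟨k, y, hy, hk⟩ := hd.exists_mem_open hopen
    ((Set.nonempty_Ioo.2 (by linarith)).image _)
  have hk' : ((y : ℝ) : AddCircle (1 : ℝ)) = ((k * θ : ℝ) : AddCircle (1 : ℝ)) := by
    rw [← nsmul_eq_mul, AddCircle.coe_nsmul]; exact hk
  obtain ⟨m, hm⟩ := AddSubgroup.mem_zmultiples_iff.1 (QuotientAddGroup.eq.1 hk'.symm)
  have hm' : (m : ℝ) = -(k * θ) + y := by simpa using hm
  exact ⟨k, m, by linarith [hy.1], by linarith [hy.2]⟩

/-- Words are constant on a short interval to the right of any point, as the floor function is. -/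
lemma exists_right_interval (θ : ℝ) (n : ℕ) (t : ℝ) :
    ∃ b > t, ∀ x ∈ Set.Ioo t b, word θ n x = word θ n t := by
  have h : ∀ᶠ x in 𝓝[>] t, ∀ j ∈ Finset.range (n + 1), ⌊x + j * θ⌋ = ⌊t + j * θ⌋ := by
    rw [Filter.eventually_all_finset]
    intro j _
    have hlt : t < ⌊t + j * θ⌋ + 1 - j * θ := by
      linarith [Int.lt_floor_add_one (t + j * θ)]
    filter_upwards [Ioo_mem_nhdsGT hlt] with x hx
    have := Int.floor_le (t + j * θ)
    exact Int.floor_eq_iff.2 ⟨by linarith [hx.1], by linarith [hx.2]⟩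
  obtain ⟨b, hb, hsub⟩ := mem_nhdsGT_iff_exists_Ioo_subset.1 h
  exact ⟨b, hb, fun x hx => word_congr (hsub hx)⟩

end Sturm

open Sturm

/-- Subword complexity of Sturmian sequences: for every `n ≥ 1`, the number of
distinct factors of length `n` is exactly `n + 1`. -/
theorem stmt17 (θ η : ℝ) (hθ : θ ∈ Set.Ioo (0 : ℝ) 1) (hirr : Irrational θ)
    (n : ℕ) (hn : 1 ≤ n) :
    Set.ncard {w : Fin n → ℤ | ∃ k : ℕ, ∀ i : Fin n, w i = sturmian θ η (k + i.1)}
      = n + 1 := by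
  have hset : {w : Fin n → ℤ | ∃ k : ℕ, ∀ i : Fin n, w i = sturmian θ η (k + i.1)}
      = word θ n '' (cuts θ n : Set ℝ) := by
    ext w
    simp only [Set.mem_ofPred_eq, sturmian_eq_word, ← funext_iff]
    constructor
    · rintro ⟨k, rfl⟩
      exact exists_cut_word_eq θ n _
    · rintro ⟨t, -, rfl⟩
      obtain ⟨b, hb, hconst⟩ := exists_right_interval θ n t
      obtain ⟨k, m, hkm⟩ := exists_orbit_mem_Ioo hirr η hb
      exact ⟨k, by rw [← hconst _ hkm, word_add_int]⟩
  rw [hset, (injOn_word θ n).ncard_image, Set.ncard_coe_finset, card_cuts hirr]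
end
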